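/- arXiv:2106.00395 — 3 statements merged into one kernel-verified Lean document; each statement's English description precedes it below -/
import Mathlib

section
/- For any odd positive integer n and any odd prime p, there are infinitely many integers d (with d, d+1, d+4 and d+4p^2 all negative) such that n divides the class number of each of the four imaginary quadratic fields ℚ(√d), ℚ(√(d+1)), ℚ(√(d+4)) and ℚ(√(d+4p^2)); that is, the set of such integers d is infinite. -/
/-- The quadratic field `ℚ(√d)`, realized as the subfield of `ℂ` generated over `ℚ`
by a complex square root of `d`. -/
noncomputable def Qsqrt (d : ℤ) : IntermediateField ℚ ℂ :=
  IntermediateField.adjoin ℚ {((d : ℂ) ^ ((1 : ℂ) / 2))}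

/-- The class number of `ℚ(√d)`: the order of the ideal class group of its ring of
integers. -/
noncomputable def classNumSqrt (d : ℤ) : ℕ :=
  Nat.card (ClassGroup (NumberField.RingOfIntegers (Qsqrt d)))

lemma lucas_mod (x y : ℂ) (a N : ℤ) (ha : x + y = a) (hN : x * y = N) (j : ℕ) :
    ∃ V W : ℤ, (x^(j+2) + y^(j+2) = V ∧ V = a^(j+2) - (j+2) * N * a^j + N^2 * W) ∧
      ∃ V' W' : ℤ, (x^(j+3) + y^(j+3) = V' ∧ V' = a^(j+3) - (j+3) * N * a^(j+1) + N^2 * W') := by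
  induction j with
  | zero =>
    refine ⟨a^2 - 2*N, 0, ⟨?_, by push_cast; ring⟩, a^3 - 3*N*a, 0, ?_, by push_cast; ring⟩
    · push_cast; rw [← ha, ← hN]; ring
    · push_cast; rw [← ha, ← hN]; ring
  | succ j ih =>
    obtain ⟨V, W, ⟨h1, h2⟩, V', W', h3, h4⟩ := ih
    refine ⟨V', W', ⟨h3, by rw [h4]; push_cast; ring⟩, a * V' - N * V,
      a * W' - N * W + (j+2) * a^j, ?_, ?_⟩
    · push_cast; rw [← ha, ← hN, ← h1, ← h3]; ring
    · rw [h4, h2]; push_cast; ring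

lemma lucas_dvd (x y : ℂ) (a N : ℤ) (ha : x + y = a) (hN : x * y = N) (j : ℕ) :
    ∃ V V' : ℤ, x^(2*j+1) + y^(2*j+1) = a * V ∧ x^(2*j+2) + y^(2*j+2) = V' := by
  induction j with
  | zero => exact ⟨1, a^2 - 2*N, by push_cast; rw [← ha]; ring, by push_cast; rw [← ha, ← hN]; ring⟩
  | succ j ih =>
    obtain ⟨V, V', h1, h2⟩ := ih
    refine ⟨V' - N * V, a * (a * (V' - N * V)) - N * V', ?_, ?_⟩
    · push_cast
      linear_combination (x+y) * h2 - (x*y) * h1 + (V':ℂ) * ha - (a * V:ℂ) * hN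
    · push_cast
      have e : x^(2*(j+1)+1) + y^(2*(j+1)+1) = a * (V' - N * V) := by
        linear_combination (x+y) * h2 - (x*y) * h1 + (V':ℂ) * ha - (a * V:ℂ) * hN
      linear_combination (x+y) * e - (x*y) * h2 + (a * (V' - N * V):ℂ) * ha - (V':ℂ) * hN

lemma no_qth (x y : ℂ) (a N : ℤ) (ha : x + y = a) (hN : x * y = N) (q n : ℕ) (hq : Odd q)
    (hq3 : 3 ≤ q) (hqn : q ≤ n) (T : ℤ) (hTpos : 0 < T) (hT : T = 1 ∨ T % 4 = 2)
    (h : x^q + y^q = T) (hN1 : T^n + T < N) (hN2 : (n:ℤ) < N) : False := by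
  obtain ⟨j, rfl⟩ := hq
  obtain ⟨V, -, h1, -⟩ := lucas_dvd x y a N ha hN j
  have hTV : T = a * V := by
    have := h.symm.trans h1; exact_mod_cast this
  obtain ⟨i, rfl⟩ : ∃ i, j = i + 1 := ⟨j - 1, by omega⟩
  obtain ⟨-, -, -, V', W', h3, h4⟩ := lucas_mod x y a N ha hN (2*i)
  have hTV' : T = V' := by
    have := h.symm.trans h3; exact_mod_cast this
  have habs : |a| ≤ T := by
    exact Int.le_of_dvd hTpos ((abs_dvd _ _).2 ⟨V, hTV⟩)
  have hpw : |a^(2*i+3)| ≤ T^n := by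
    rw [abs_pow]
    calc |a|^(2*i+3) ≤ T^(2*i+3) := by gcongr
      _ ≤ T^n := pow_le_pow_right₀ (by omega) (by omega)
  have hdvd : N ∣ T - a^(2*i+3) := ⟨-(2*i+3)*a^(2*i+1) + N*W', by
    rw [hTV', h4]; push_cast; ring⟩
  have heq : T - a^(2*i+3) = 0 := by
    apply Int.eq_zero_of_abs_lt_dvd hdvd
    calc |T - a^(2*i+3)| ≤ |T| + |a^(2*i+3)| := abs_sub _ _
      _ ≤ T + T^n := by rw [abs_of_pos hTpos]; gcongr
      _ < N := by linarith
  rcases hT with rfl | hT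
  · have hao : a^(2*i+3) = 1 := by linarith
    have ha1 : a = 1 := by
      have : Odd (2*i+3) := ⟨i+1, by ring⟩
      have h0 : 0 < a := this.pow_pos_iff.mp (by omega)
      have : |a| = a := abs_of_pos h0
      omega
    have hN0 : N ≠ 0 := by omega
    have : N * (2*i+3) = N * (N * W') := by
      rw [← hTV', hao, ha1] at h4; push_cast at h4; linear_combination h4
    have h5 := mul_left_cancel₀ hN0 this
    have := Int.le_of_dvd (by omega) (⟨W', h5⟩ : N ∣ (2*i+3 : ℤ))
    omega
  · have : Even a := by
      have h6 : Even (a^(2*i+3)) := by rw [Int.even_iff]; omega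
      exact (Int.even_pow.mp h6).1
    obtain ⟨b, rfl⟩ := this
    have : T = 4 * (2 * b^3 * (b+b)^(2*i)) := by
      have : T = (b+b)^(2*i+3) := by linarith
      rw [this]; ring
    omega

lemma quad_dvd {R : Type*} [CommRing R] [IsDedekindDomain R] (φ : R →+* ℂ)
    (H1 : ∀ x : R, ∃ t N : ℤ, φ x + (starRingEnd ℂ) (φ x) = t ∧ φ x * (starRingEnd ℂ) (φ x) = N)
    (H2 : ∀ u : Rˣ, u ^ 4 = 1) (n : ℕ) (hn : Odd n) (T M : ℤ) (α α' : R)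
    (hconj : (starRingEnd ℂ) (φ α) = φ α')
    (hsum : α + α' = (T : R)) (hprod : α * α' = (M : R) ^ n) (hcop : IsCoprime T M)
    (hTpos : 0 < T) (hT : T = 1 ∨ T % 4 = 2) (hM1 : T ^ n + T < M) (hM2 : (n : ℤ) < M) :
    n ∣ Nat.card (ClassGroup R) := by
  have hn0 : 0 < n := hn.pos
  have hTn : 0 < T ^ n := pow_pos hTpos n
  have hM0 : 0 < M := by omega
  have hco : IsCoprime α α' := by
    have h1 : IsCoprime (T : R) (M : R) := by
      simpa using hcop.map (Int.castRingHom R)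
    have h2 : IsCoprime (T : R) ((M : R) ^ n) := h1.pow_right
    rw [← hsum, ← hprod] at h2
    have h3 : IsCoprime (α + α') α := h2.of_mul_right_left
    have h4 : IsCoprime (α' + α * 1) α := by rwa [mul_one, add_comm]
    exact (IsCoprime.of_add_mul_left_left h4).symm
  have hMR : (M : R) ≠ 0 := by
    intro h0
    have := congrArg φ h0
    simp at this
    omega
  have hα0 : α ≠ 0 := by
    rintro rfl
    rw [zero_mul] at hprod
    exact pow_ne_zero n hMR hprod.symm
  obtain ⟨I, hI⟩ : ∃ I : Ideal R, Ideal.span {α} = I ^ n := by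
    apply exists_eq_pow_of_mul_eq_pow_of_coprime (b := Ideal.span {α'}) (c := Ideal.span {(M : R)})
    · rw [Ideal.isCoprime_span_singleton_iff]; exact hco
    · rw [Ideal.span_singleton_mul_span_singleton, hprod, Ideal.span_singleton_pow]
  have hI0 : I ≠ 0 := by
    rintro rfl
    rw [zero_pow hn0.ne'] at hI
    exact hα0 (by simpa using hI)
  let J : nonZeroDivisors (Ideal R) := ⟨I, mem_nonZeroDivisors_of_ne_zero hI0⟩
  have hJ : ClassGroup.mk0 J ^ n = 1 := by
    rw [← map_pow, ClassGroup.mk0_eq_one_iff]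
    exact ⟨⟨α, by simpa [J] using hI.symm⟩⟩
  have hord : orderOf (ClassGroup.mk0 J) = n := by
    apply orderOf_eq_of_pow_and_pow_div_prime hn0 hJ
    intro q hq hqn hq1
    have hqodd : Odd q := hn.of_dvd_nat hqn
    have hq3 : 3 ≤ q := by
      have := hq.two_le
      rcases hqodd with ⟨j, rfl⟩
      omega
    obtain ⟨r, rfl⟩ := hqn
    have hr : 0 < r := Nat.pos_of_mul_pos_left hn0
    rw [Nat.mul_div_cancel_left r hq.pos, ← map_pow, ClassGroup.mk0_eq_one_iff] at hq1
    obtain ⟨⟨β, hβ⟩⟩ := hq1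
    have hβ' : I ^ r = Ideal.span {β} := by simpa [J] using hβ
    have hass : Associated (β ^ q) α := by
      rw [← Ideal.span_singleton_eq_span_singleton, ← Ideal.span_singleton_pow, ← hβ', hI,
        ← pow_mul, mul_comm]
    obtain ⟨u, hu⟩ := hass
    have huq : (u ^ q) ^ q = u := by
      obtain ⟨j, rfl⟩ := hqodd
      rw [← pow_mul]
      have : (2*j+1)*(2*j+1) = 4 * (j*j+j) + 1 := by ring
      rw [this, pow_succ, pow_mul, H2, one_pow, one_mul]
    set γ : R := β * (u ^ q : Rˣ) with hγ
    have hγq : γ ^ q = α := by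
      rw [hγ, mul_pow, ← hu, ← Units.val_pow_eq_pow_val, huq]
    obtain ⟨a, N, ha, hN⟩ := H1 γ
    have e1 : φ γ ^ q = φ α := by rw [← map_pow, hγq]
    have e2 : (starRingEnd ℂ) (φ γ) ^ q = φ α' := by rw [← map_pow, e1, hconj]
    have hNpos : 0 ≤ N := by
      have : (0:ℝ) ≤ N := by
        have h5 := Complex.mul_conj (φ γ)
        rw [hN] at h5
        have h6 : ((N:ℝ):ℂ) = ((Complex.normSq (φ γ) : ℝ) : ℂ) := by simpa using h5
        rw [Complex.ofReal_inj.mp h6]; exact Complex.normSq_nonneg _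
      exact_mod_cast this
    have hNq : N ^ q = (M ^ r) ^ q := by
      have h7 : (N : ℂ) ^ q = ((M : ℂ) ^ r) ^ q := by
        rw [← hN, mul_pow, e1, e2, ← map_mul, hprod, ← pow_mul, mul_comm r q]; simp
      exact_mod_cast h7
    have hNM : N = M ^ r := (pow_left_inj₀ hNpos (by positivity) hq.ne_zero).mp hNq
    have hNM' : M ≤ N := by rw [hNM]; exact le_self_pow₀ (by omega) hr.ne'
    refine no_qth _ _ a N ha hN q (q*r) hqodd hq3 (Nat.le_mul_of_pos_right q hr) T hTpos hT ?_
      (by omega) (by omega)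
    rw [e1, e2, ← map_add, hsum]; simp
  rw [← hord]
  exact orderOf_dvd_natCard _

lemma sqrt_sq (D : ℤ) : ((D : ℂ) ^ ((1 : ℂ) / 2)) ^ 2 = D := by
  have := Complex.cpow_nat_inv_pow (D : ℂ) (n := 2) (by norm_num)
  simpa using this

lemma sqrt_conj (D : ℤ) (hD : D < 0) (s : ℂ) (hs : s ^ 2 = D) : (starRingEnd ℂ) s = -s := by
  have h1 := congrArg Complex.re hs
  have h2 := congrArg Complex.im hs
  simp [pow_two] at h1 h2
  have hD' : (D : ℝ) < 0 := by exact_mod_cast hD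
  have hre : s.re = 0 := by
    by_contra h
    have him : s.im = 0 := by
      have : s.re * s.im = 0 := by linarith
      exact (mul_eq_zero.mp this).resolve_left h
    rw [him] at h1
    nlinarith [mul_self_nonneg s.re]
  apply Complex.ext <;> simp [hre]

lemma mem_form (D : ℤ) (z : ℂ) (hz : z ∈ Qsqrt D) :
    ∃ a b : ℚ, z = a + b * ((D : ℂ) ^ ((1 : ℂ) / 2)) := by
  have hs := sqrt_sq D
  unfold Qsqrt at hz
  generalize ((D : ℂ) ^ ((1 : ℂ) / 2)) = s at *
  induction hz using IntermediateField.adjoin_induction with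
  | mem x hx => exact ⟨0, 1, by simpa using hx⟩
  | algebraMap x => exact ⟨x, 0, by simp⟩
  | add x y hx hy h1 h2 =>
    obtain ⟨a, b, rfl⟩ := h1
    obtain ⟨c, d, rfl⟩ := h2
    exact ⟨a + c, b + d, by push_cast; ring⟩
  | mul x y hx hy h1 h2 =>
    obtain ⟨a, b, rfl⟩ := h1
    obtain ⟨c, d, rfl⟩ := h2
    exact ⟨a * c + b * d * D, a * d + b * c, by push_cast; linear_combination (b * d : ℂ) * hs⟩
  | inv x hx h1 =>
    obtain ⟨a, b, rfl⟩ := h1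
    by_cases h0 : (a + b * s : ℂ) = 0
    · exact ⟨0, 0, by simp [h0]⟩
    by_cases h3 : (a - b * s : ℂ) = 0
    · have h4 : (a + b * s : ℂ) = (2 * a : ℚ) := by push_cast; linear_combination -h3
      exact ⟨(2 * a)⁻¹, 0, by rw [h4]; push_cast; ring⟩
    · have h5 : ((a ^ 2 - b ^ 2 * D : ℚ) : ℂ) = (a + b * s) * (a - b * s) := by
        push_cast; linear_combination (b ^ 2 : ℂ) * hs
      refine ⟨a / (a ^ 2 - b ^ 2 * D), -b / (a ^ 2 - b ^ 2 * D), ?_⟩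
      rw [Rat.cast_div, Rat.cast_div, h5]
      push_cast
      field_simp
      ring

lemma sqrt_mem (D : ℤ) : ((D : ℂ) ^ ((1 : ℂ) / 2)) ∈ Qsqrt D :=
  IntermediateField.subset_adjoin _ _ rfl

lemma qsqrt_numberField (D : ℤ) : NumberField (Qsqrt D) := by
  have : FiniteDimensional ℚ (Qsqrt D) := by
    unfold Qsqrt
    apply IntermediateField.adjoin.finiteDimensional
    have h : IsIntegral ℚ (((D : ℂ) ^ ((1 : ℂ) / 2)) ^ 2) := by
      rw [sqrt_sq]
      exact_mod_cast isIntegral_algebraMap (R := ℚ) (A := ℂ) (x := (D : ℚ))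
    exact IsIntegral.of_pow (by norm_num) h
  exact { to_charZero := inferInstance, to_finiteDimensional := this }

lemma int_of_rat (q : ℚ) (z : ℂ) (hz : z = q) (h : IsIntegral ℤ z) : ∃ t : ℤ, z = t := by
  have h1 : IsIntegral ℤ (algebraMap ℚ ℂ q) := by simpa [hz] using h
  have h2 : IsIntegral ℤ q := (isIntegral_algebraMap_iff (algebraMap ℚ ℂ).injective).mp h1
  obtain ⟨t, ht⟩ := IsIntegrallyClosed.isIntegral_iff.mp h2
  refine ⟨t, ?_⟩
  rw [hz, ← ht]; simp

lemma field_dvd (D : ℤ) (hD : D < 0) (n : ℕ) (hn : Odd n) (T M : ℤ) (c : ℚ)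
    (hc : c ^ 2 * D = ((T ^ 2 - 4 * M ^ n : ℤ) : ℚ)) (h3 : ¬ (3 : ℤ) ∣ T ^ 2 - 4 * M ^ n)
    (hcop : IsCoprime T M)
    (hTpos : 0 < T) (hT : T = 1 ∨ T % 4 = 2) (hM1 : T ^ n + T < M) (hM2 : (n : ℤ) < M) :
    n ∣ classNumSqrt D := by
  have := qsqrt_numberField D
  unfold classNumSqrt
  have hs := sqrt_sq D
  have hsc := sqrt_conj D hD _ hs
  have hmem := sqrt_mem D
  have hform := mem_form D
  generalize ((D : ℂ) ^ ((1 : ℂ) / 2)) = s at *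
  let φ : NumberField.RingOfIntegers (Qsqrt D) →+* ℂ :=
    (algebraMap (Qsqrt D) ℂ).comp (algebraMap (NumberField.RingOfIntegers (Qsqrt D)) (Qsqrt D))
  have hinj : Function.Injective φ := (algebraMap (Qsqrt D) ℂ).injective.comp
    NumberField.RingOfIntegers.coe_injective
  have hφmem : ∀ x, ∃ a b : ℚ, φ x = a + b * s := fun x => hform _ (x : Qsqrt D).2
  have hφint : ∀ x, IsIntegral ℤ (φ x) := fun x => by
    have h := NumberField.RingOfIntegers.isIntegral_coe x
    exact h.map ((algebraMap (Qsqrt D) ℂ).toIntAlgHom)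
  have hlift : ∀ z : ℂ, z ∈ Qsqrt D → IsIntegral ℤ z → ∃ x, φ x = z := fun z hz hi => by
    have : IsIntegral ℤ (⟨z, hz⟩ : Qsqrt D) :=
      (isIntegral_algHom_iff ((algebraMap (Qsqrt D) ℂ).toIntAlgHom)
        (algebraMap (Qsqrt D) ℂ).injective).mp hi
    exact ⟨⟨⟨z, hz⟩, this⟩, rfl⟩
  have hcr : ∀ a b : ℚ, (starRingEnd ℂ) (a + b * s : ℂ) = a - b * s := fun a b => by
    simp [hsc]; ring
  have H1 : ∀ x, ∃ t N : ℤ, φ x + (starRingEnd ℂ) (φ x) = t ∧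
      φ x * (starRingEnd ℂ) (φ x) = N := fun x => by
    obtain ⟨a, b, hab⟩ := hφmem x
    have hi := hφint x
    have hi' : IsIntegral ℤ ((starRingEnd ℂ) (φ x)) := hi.map ((starRingEnd ℂ).toIntAlgHom)
    obtain ⟨t, ht⟩ := int_of_rat (2 * a) _ (by rw [hab, hcr]; push_cast; ring) (hi.add hi')
    obtain ⟨N, hN⟩ := int_of_rat (a ^ 2 - b ^ 2 * D) _
      (by rw [hab, hcr]; push_cast; linear_combination (-b ^ 2 : ℂ) * hs) (hi.mul hi')
    exact ⟨t, N, ht, hN⟩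
  have hE : (T ^ 2 - 4 * M ^ n : ℤ) ≠ 0 := fun h => h3 (h ▸ dvd_zero _)
  have hc0 : c ≠ 0 := by
    rintro rfl
    apply hE
    have : ((T ^ 2 - 4 * M ^ n : ℤ) : ℚ) = 0 := by rw [← hc]; ring
    exact_mod_cast this
  have hnorm : ∀ x, ∃ N : ℤ, 0 ≤ N ∧ φ x * (starRingEnd ℂ) (φ x) = N := fun x => by
    obtain ⟨-, N, -, hN⟩ := H1 x
    refine ⟨N, ?_, hN⟩
    have : (0:ℝ) ≤ N := by
      have h5 := Complex.mul_conj (φ x)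
      rw [hN] at h5
      have h6 : ((N:ℝ):ℂ) = ((Complex.normSq (φ x) : ℝ) : ℂ) := by simpa using h5
      rw [Complex.ofReal_inj.mp h6]; exact Complex.normSq_nonneg _
    exact_mod_cast this
  have H2 : ∀ u : (NumberField.RingOfIntegers (Qsqrt D))ˣ, u ^ 4 = 1 := fun u => by
    obtain ⟨N, hN0, hN⟩ := hnorm u
    obtain ⟨N', hN0', hN'⟩ := hnorm (u⁻¹ : (NumberField.RingOfIntegers (Qsqrt D))ˣ)
    have hNN : N * N' = 1 := by
      have h1 : φ u * φ (u⁻¹ : (NumberField.RingOfIntegers (Qsqrt D))ˣ) = 1 := by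
        rw [← map_mul]; simp
      have h2 := congrArg (starRingEnd ℂ) h1
      rw [map_mul, map_one] at h2
      have : (N * N' : ℂ) = 1 := by
        rw [← hN, ← hN']; linear_combination h2 * (φ u * φ (u⁻¹ : (NumberField.RingOfIntegers (Qsqrt D))ˣ)) + h1
      exact_mod_cast this
    have hN1 : N = 1 := Int.eq_one_of_mul_eq_one_right hN0 hNN
    obtain ⟨t, -, ht, -⟩ := H1 u
    obtain ⟨a, b, hab⟩ := hφmem u
    rw [hN1] at hN
    have hquad : φ u ^ 2 - t * φ u + 1 = 0 := by
      rw [← ht]; push_cast at hN; linear_combination -hN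
    have hdisc : ((t ^ 2 - 4 : ℤ) : ℚ) = (2 * b) ^ 2 * D := by
      have : ((t ^ 2 - 4 : ℤ) : ℂ) = ((2 * b) ^ 2 * D : ℚ) := by
        push_cast
        rw [← ht, ← hs]
        push_cast at hN
        have h8 : ∀ w v : ℂ, w * v = 1 → (w + v) ^ 2 - 4 = (w - v) ^ 2 := fun w v h => by
          linear_combination (4 : ℂ) * h
        rw [h8 _ _ hN, hab, hcr]; ring
      exact_mod_cast this
    have ht4 : t ^ 2 - 4 ≤ 0 := by
      have hDq : (D : ℚ) < 0 := by exact_mod_cast hD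
      have : ((t ^ 2 - 4 : ℤ) : ℚ) ≤ 0 := by
        rw [hdisc]; exact mul_nonpos_of_nonneg_of_nonpos (sq_nonneg _) hDq.le
      exact_mod_cast this
    have hne : t ^ 2 - 4 ≠ -3 := fun h => by
      rw [h] at hdisc
      have hsq : IsSquare (((-3) * (T ^ 2 - 4 * M ^ n) : ℤ) : ℚ) := by
        refine ⟨2 * b * (T ^ 2 - 4 * M ^ n : ℤ) / c, ?_⟩
        have hcE : c ^ 2 ≠ 0 := pow_ne_zero 2 hc0
        rw [div_mul_div_comm, eq_div_iff (mul_ne_zero hc0 hc0)]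
        rw [Int.cast_mul, hdisc]
        linear_combination (2*b)^2 * ((T ^ 2 - 4 * M ^ n : ℤ) : ℚ) * hc
      rw [Rat.isSquare_intCast_iff] at hsq
      obtain ⟨z, hz⟩ := hsq
      have h9 : (3:ℤ) ∣ z := by
        have : (3:ℤ) ∣ z * z := ⟨-(T ^ 2 - 4 * M ^ n), by rw [← hz]; ring⟩
        exact (Int.prime_three.dvd_or_dvd this).elim id id
      obtain ⟨y, rfl⟩ := h9
      exact h3 ⟨-(y*y), by linarith⟩
    have htle : -2 ≤ t ∧ t ≤ 2 := by constructor <;> nlinarith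
    have h4 : φ u ^ 4 = 1 := by
      obtain ⟨hl, hr⟩ := htle
      interval_cases t
      · have : (φ u + 1) ^ 2 = 0 := by push_cast at hquad; linear_combination hquad
        have : φ u = -1 := by linear_combination pow_eq_zero_iff (two_ne_zero) |>.mp this
        rw [this]; norm_num
      · exact absurd rfl hne
      · have : φ u ^ 2 = -1 := by push_cast at hquad; linear_combination hquad
        rw [show φ u ^ 4 = (φ u ^ 2) ^ 2 by ring, this]; norm_num
      · exact absurd rfl hne
      · have : (φ u - 1) ^ 2 = 0 := by push_cast at hquad; linear_combination hquad
        have : φ u = 1 := by linear_combination pow_eq_zero_iff (two_ne_zero) |>.mp this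
        rw [this]; norm_num
    apply Units.ext
    apply hinj
    simpa using h4
  have hcC : (c : ℂ) ^ 2 * D = T ^ 2 - 4 * M ^ n := by exact_mod_cast congrArg (fun x : ℚ => (x : ℂ)) hc
  have hratmem : ∀ r : ℚ, (r : ℂ) ∈ Qsqrt D := fun r => by
    simpa using (Qsqrt D).algebraMap_mem r
  have hpoly : ∀ e : ℚ, e ^ 2 = c ^ 2 → ∃ x, φ x = ((T / 2 : ℚ) : ℂ) + (e / 2 : ℚ) * s := fun e he => by
    apply hlift
    · exact add_mem (hratmem _) (mul_mem (hratmem _) hmem)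
    · have heC : (e : ℂ) ^ 2 = c ^ 2 := by exact_mod_cast congrArg (fun x : ℚ => (x : ℂ)) he
      refine ⟨Polynomial.X ^ 2 - Polynomial.C T * Polynomial.X + Polynomial.C (M ^ n), by monicity!, ?_⟩
      simp only [Polynomial.eval₂_add, Polynomial.eval₂_sub, Polynomial.eval₂_mul,
        Polynomial.eval₂_pow, Polynomial.eval₂_X, Polynomial.eval₂_C]
      simp only [eq_intCast, algebraMap_int_eq]
      push_cast
      rw [← hs] at hcC
      linear_combination hcC / 4 + heC * s ^ 2 / 4
  obtain ⟨α, hα⟩ := hpoly c rfl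
  obtain ⟨α', hα'⟩ := hpoly (-c) (by ring)
  refine quad_dvd φ H1 H2 n hn T M α α' ?_ ?_ ?_ hcop hTpos hT hM1 hM2
  · rw [hα, hα', hcr]; push_cast; ring
  · apply hinj
    rw [map_add, hα, hα']; push_cast; rw [map_intCast]; ring
  · apply hinj
    rw [map_mul, hα, hα', map_pow, map_intCast]; push_cast
    rw [← hs] at hcC
    linear_combination -hcC / 4

theorem infinite_quadruples_classNumber_dvd
    (n p : ℕ) (hn : Odd n) (hnpos : 0 < n) (hp : p.Prime) (hpodd : Odd p) :
    {d : ℤ | d < 0 ∧ d + 1 < 0 ∧ d + 4 < 0 ∧ d + 4 * (p : ℤ) ^ 2 < 0 ∧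
      n ∣ classNumSqrt d ∧ n ∣ classNumSqrt (d + 1) ∧ n ∣ classNumSqrt (d + 4) ∧
      n ∣ classNumSqrt (d + 4 * (p : ℤ) ^ 2)}.Infinite := by
  apply Set.infinite_of_forall_exists_lt
  intro B
  have hp2 : (2 : ℤ) ≤ p := by exact_mod_cast hp.two_le
  obtain ⟨t, ht⟩ : ∃ t : ℤ, t = |B| + n + (2 * p) ^ n + 2 * p + 2 ^ n + p ^ 2 + 5 := ⟨_, rfl⟩
  have hB := neg_abs_le B
  have hB0 := abs_nonneg B
  have hq1 : (0:ℤ) < (2 * p) ^ n := by positivity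
  have hq2 : (0:ℤ) < 2 ^ n := by positivity
  have hq3 : (0:ℤ) < (p:ℤ) ^ 2 := by positivity
  obtain ⟨m, hm⟩ : ∃ m : ℤ, m = 3 * p * t := ⟨_, rfl⟩
  have hmt : t ≤ m := by rw [hm]; nlinarith
  obtain ⟨k, hk⟩ : ∃ k : ℤ, k = 4 * m ^ n - 1 := ⟨_, rfl⟩
  have hmn : m ≤ m ^ n := le_self_pow₀ (by omega) hnpos.ne'
  have hkm : m ≤ k := by omega
  have hkn : k ≤ k ^ n := le_self_pow₀ (by omega) hnpos.ne'
  have hm3 : (3:ℤ) ∣ m ^ n := dvd_pow ⟨p * t, by rw [hm]; ring⟩ hnpos.ne'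
  have hmp : (p:ℤ) ∣ m ^ n := dvd_pow ⟨3 * t, by rw [hm]; ring⟩ hnpos.ne'
  have hk3 : k ^ n % 3 = 2 := by
    have h1 : k ≡ -1 [ZMOD 3] := by
      obtain ⟨w, hw⟩ := hm3
      rw [hk, hw]; exact (Int.modEq_iff_dvd.mpr ⟨-(4*w), by ring⟩)
    have h2 := h1.pow n
    rw [hn.neg_one_pow] at h2
    exact h2
  have hodd : IsCoprime (2:ℤ) k := ⟨2 * m ^ n, -1, by rw [hk]; ring⟩
  have hpk : IsCoprime (p:ℤ) k := by
    obtain ⟨w, hw⟩ := hmp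
    exact ⟨4 * w, -1, by rw [hk, hw]; ring⟩
  refine ⟨-4 * k ^ n, ⟨by omega, by omega, by omega, by omega, ?_, ?_, ?_, ?_⟩, by omega⟩
  · obtain ⟨j, hj⟩ := id hn
    have hk0 : (k:ℚ) ≠ 0 := by
      have : k ≠ 0 := by omega
      exact_mod_cast this
    refine field_dvd _ (by omega) n hn 1 m (1 / (2 * k ^ j)) ?_ (by omega) isCoprime_one_left
      (by omega) (Or.inl rfl) (by rw [one_pow]; omega) (by omega)
    have e : (1 ^ 2 - 4 * m ^ n : ℤ) = -k := by rw [hk]; ring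
    rw [e, hj]
    push_cast
    field_simp
    ring
  · exact field_dvd _ (by omega) n hn 1 k 1 (by push_cast; ring) (by omega) isCoprime_one_left
      (by omega) (Or.inl rfl) (by rw [one_pow]; omega) (by omega)
  · exact field_dvd _ (by omega) n hn 2 k 1 (by push_cast; ring) (by omega) hodd
      (by omega) (Or.inr rfl) (by omega) (by omega)
  · refine field_dvd _ (by omega) n hn (2 * p) k 1 (by push_cast; ring) ?_ (hodd.mul_left hpk)
      (by omega) (Or.inr ?_) (by omega) (by omega)
    · have : (p:ℤ) ^ 2 % 3 = 0 ∨ (p:ℤ) ^ 2 % 3 = 1 := by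
        have : (p:ℤ) % 3 = 0 ∨ (p:ℤ) % 3 = 1 ∨ (p:ℤ) % 3 = 2 := by omega
        rcases this with h | h | h <;> simp [pow_two, Int.mul_emod, h]
      rw [mul_pow]
      omega
    · obtain ⟨j, hj⟩ := hpodd
      omega
end

section
/- Let ℓ > 1 and n > 1 be odd integers with ℓ ≡ 3 (mod 4). For x ∈ {3, 5} with gcd(ℓ, x) = 1, the class number of the imaginary quadratic field ℚ(√(x^2 − ℓ^n)) is divisible by n, except in the case (ℓ, n) = (3, 3). -/
namespace CN


def cc : ℕ → ℕ → ℤ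
  | 0, r => (-1) ^ r * (Nat.centralBinom r : ℤ)
  | (_ + 1), 0 => 1
  | (n + 1), (r + 1) => cc n (r + 1) + 4 * cc n r

def FF (n r : ℕ) : ℤ := ∏ i ∈ Finset.range r, (2 * (n : ℤ) - 1 - 2 * (i : ℤ))

def OO (n : ℕ) : ℤ := ∏ i ∈ Finset.range n, (2 * (i : ℤ) + 1)

def PP (n : ℕ) (c : ℤ) : ℤ := ∏ i ∈ Finset.range (n + 1), (2 * (i : ℤ) + c)

lemma FF_succ (n r : ℕ) : FF n (r + 1) = FF n r * (2 * (n : ℤ) - 1 - 2 * (r : ℤ)) := by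
  simp [FF, Finset.prod_range_succ]

lemma FF_succ_succ (n r : ℕ) : FF (n + 1) (r + 1) = (2 * (n : ℤ) + 1) * FF n r := by
  simp only [FF, Finset.prod_range_succ']
  rw [mul_comm]
  congr 1
  · push_cast; ring
  · apply Finset.prod_congr rfl; intro i _; push_cast; ring

lemma cc_fact (n r : ℕ) : (r.factorial : ℤ) * cc n r = 2 ^ r * FF n r := by
  induction n generalizing r with
  | zero =>
    induction r with
    | zero => simp [cc, FF]
    | succ r ih =>
      have h := Nat.succ_mul_centralBinom_succ r
      have h' : ((r : ℤ) + 1) * (Nat.centralBinom (r + 1) : ℤ) = 2 * (2 * r + 1) * Nat.centralBinom r := by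
        exact_mod_cast h
      rw [FF_succ]
      simp only [cc] at ih ⊢
      rw [Nat.factorial_succ]
      push_cast
      have : ((r : ℤ) + 1) * (r.factorial : ℤ) * ((-1) ^ (r + 1) * (Nat.centralBinom (r + 1) : ℤ))
        = - (r.factorial : ℤ) * (-1) ^ r * (((r : ℤ) + 1) * (Nat.centralBinom (r + 1) : ℤ)) := by ring
      rw [this, h']
      linear_combination (-2 * (2 * (r : ℤ) + 1)) * ih
  | succ n ih =>
    cases r with
    | zero => simp [cc, FF]
    | succ r =>
      rw [FF_succ_succ]
      simp only [cc]
      have h1 := ih (r + 1)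
      have h2 := ih r
      rw [FF_succ] at h1
      rw [mul_add, h1, Nat.factorial_succ]
      push_cast
      linear_combination (4 * ((r : ℤ) + 1)) * h2

lemma FF_odd (n r : ℕ) : Odd (FF n r) := by
  induction r with
  | zero => simp [FF]
  | succ r ih => rw [FF_succ]; exact ih.mul ⟨n - 1 - r, by ring⟩

lemma OO_succ (n : ℕ) : OO (n + 1) = OO n * (2 * (n : ℤ) + 1) := by
  simp [OO, Finset.prod_range_succ]

lemma OO_pos (n : ℕ) : 0 < OO n := Finset.prod_pos (fun i _ => by positivity)

lemma PP_ne (n : ℕ) (c : ℤ) (hc : Odd c) : PP n c ≠ 0 := by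
  unfold PP
  rw [Finset.prod_ne_zero_iff]
  intro i _
  obtain ⟨t, rfl⟩ := hc
  omega

lemma PP_succ (n : ℕ) (c : ℤ) : PP (n + 1) c = PP n c * (2 * (n : ℤ) + 2 + c) := by
  simp only [PP, Finset.prod_range_succ _ (n + 1)]; push_cast; ring

lemma PP_shift (n : ℕ) (c : ℤ) : PP n c * (2 * (n : ℤ) + 2 + c) = c * PP n (c + 2) := by
  rw [← PP_succ]
  simp only [PP, Finset.prod_range_succ' _ (n + 1)]
  rw [mul_comm]
  congr 1
  · simp
  · apply Finset.prod_congr rfl; intro i _; push_cast; ring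

lemma FF_OO (n j : ℕ) : FF (n + j) n * OO j = OO (n + j) := by
  induction n with
  | zero => simp [FF]
  | succ n ih =>
    rw [show n + 1 + j = (n + j) + 1 by ring, FF_succ_succ, OO_succ, ← ih]; push_cast; ring

/-- a side -/
lemma PP_a (n2 j : ℕ) : PP n2 (1 - 2 * (j : ℤ)) * FF (n2 + 1) j = (-1) ^ j * (OO (n2 + 1) * OO j) := by
  induction j with
  | zero => 
    simp only [PP, OO, FF]; simp
  | succ j ih =>
    have h := PP_shift n2 (1 - 2 * ((j + 1 : ℕ) : ℤ))
    rw [FF_succ, OO_succ j]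
    push_cast at h ⊢
    rw [show (1 - 2 * ((j : ℤ) + 1) + 2) = 1 - 2 * (j : ℤ) by ring] at h
    linear_combination (FF (n2 + 1) j) * h + (1 - 2 * ((j : ℤ) + 1)) * ih

lemma PP_b (n1 i : ℕ) : PP n1 (-1 - 2 * (i : ℤ)) * FF n1 i = (-1) ^ (i + 1) * (OO n1 * OO (i + 1)) := by
  induction i with
  | zero =>
    simp only [PP, Finset.prod_range_succ', OO, FF]; simp
    apply Finset.prod_congr rfl; intro i _; ring
  | succ j ih =>
    have h := PP_shift n1 (-1 - 2 * ((j + 1 : ℕ) : ℤ))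
    rw [FF_succ, OO_succ (j + 1)]
    push_cast at h ⊢
    rw [show (-1 - 2 * ((j : ℤ) + 1) + 2) = -1 - 2 * (j : ℤ) by ring] at h
    linear_combination (FF n1 j) * h + (-1 - 2 * ((j : ℤ) + 1)) * ih

noncomputable def gg (n : ℕ) (c : ℤ) : ℝ :=
  ∑ i ∈ Finset.range (n + 1), (n.choose i : ℝ) * (-1) ^ i / (2 * (i : ℝ) + c)

lemma gg_succ (n : ℕ) (c : ℤ) : gg (n + 1) c = gg n c - gg n (c + 2) := by
  unfold gg
  rw [Finset.sum_range_succ']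
  have h1 : ∑ k ∈ Finset.range (n + 1), ((n + 1).choose (k + 1) : ℝ) * (-1) ^ (k + 1) / (2 * ((k + 1 : ℕ) : ℝ) + c)
    = ∑ k ∈ Finset.range (n + 1), (n.choose (k + 1) : ℝ) * (-1) ^ (k + 1) / (2 * ((k + 1 : ℕ) : ℝ) + c)
     - ∑ k ∈ Finset.range (n + 1), (n.choose k : ℝ) * (-1) ^ k / (2 * (k : ℝ) + ((c + 2 : ℤ) : ℝ)) := by
    rw [← Finset.sum_sub_distrib]
    apply Finset.sum_congr rfl
    intro k _
    rw [Nat.choose_succ_succ]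
    push_cast
    rw [show 2 * (k : ℝ) + (c + 2) = 2 * ((k : ℝ) + 1) + c by ring]
    ring
  rw [h1]
  have h2 : ∑ i ∈ Finset.range (n + 1), (n.choose i : ℝ) * (-1) ^ i / (2 * (i : ℝ) + c)
    = ∑ i ∈ Finset.range (n + 2), (n.choose i : ℝ) * (-1) ^ i / (2 * (i : ℝ) + c) := by
    rw [Finset.sum_range_succ _ (n + 1)]; simp
  rw [h2, Finset.sum_range_succ' _ (n + 1)]
  simp only [Nat.choose_zero_right]
  ring

lemma gg_eq (n : ℕ) (c : ℤ) (hc : Odd c) : gg n c * (PP n c : ℝ) = 2 ^ n * (n.factorial : ℝ) := by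
  induction n generalizing c with
  | zero =>
    obtain ⟨t, rfl⟩ := hc
    have : (2 * (t : ℝ) + 1) ≠ 0 := by
      have : (2 * t + 1 : ℤ) ≠ 0 := by omega
      exact_mod_cast this
    simp [gg, PP, this]
  | succ n ih =>
    have hc2 : Odd (c + 2) := hc.add_even (by decide)
    have h1 := ih c hc
    have h2 := ih (c + 2) hc2
    have hs : (PP n c : ℝ) * (2 * (n : ℝ) + 2 + c) = c * PP n (c + 2) := by exact_mod_cast PP_shift n c
    have hs' : (PP (n + 1) c : ℝ) = PP n c * (2 * (n : ℝ) + 2 + c) := by exact_mod_cast PP_succ n c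
    rw [gg_succ, Nat.factorial_succ]
    push_cast
    have e : (gg n c - gg n (c + 2)) * (PP (n + 1) c : ℝ)
      = gg n c * PP n c * (2 * (n : ℝ) + 2 + c) - c * (gg n (c + 2) * PP n (c + 2)) := by
      rw [sub_mul, hs']
      linear_combination (-gg n (c + 2)) * hs
    rw [e, h1, h2]; ring

/-- normalising factor -/
noncomputable def MM (n1 n2 : ℕ) : ℝ :=
  (OO (n2 + 1) : ℝ) * OO n1 * 2 ^ n1 / (2 ^ n2 * n1.factorial * n2.factorial)

lemma MM_a (n1 n2 j : ℕ) (hj : j ≤ n1) :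
    MM n1 n2 * (n1.choose j * gg n2 (1 - 2 * (j : ℤ)))
      = (-1) ^ j * ((cc (n2 + 1) j * cc n1 (n1 - j) : ℤ) : ℝ) := by
  obtain ⟨t, rfl⟩ := Nat.exists_eq_add_of_le hj
  rw [Nat.add_sub_cancel_left]
  have hodd : Odd (1 - 2 * (j : ℤ)) := ⟨-j, by ring⟩
  have hP : (PP n2 (1 - 2 * (j : ℤ)) : ℝ) ≠ 0 := by exact_mod_cast PP_ne n2 _ hodd
  have hg := gg_eq n2 _ hodd
  have ha : (PP n2 (1 - 2 * (j : ℤ)) : ℝ) * FF (n2 + 1) j = (-1) ^ j * (OO (n2 + 1) * OO j) := by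
    exact_mod_cast PP_a n2 j
  have hf : (FF (j + t) t : ℝ) * OO j = OO (j + t) := by
    have := FF_OO t j
    rw [add_comm t j] at this; exact_mod_cast this
  have hc1 : (j.factorial : ℝ) * cc (n2 + 1) j = 2 ^ j * FF (n2 + 1) j := by exact_mod_cast cc_fact _ _
  have hc2 : (t.factorial : ℝ) * cc (j + t) t = 2 ^ t * FF (j + t) t := by exact_mod_cast cc_fact _ _
  have hch : ((j + t).choose j : ℝ) * j.factorial * t.factorial = (j + t).factorial := by
    rw [Nat.choose_symm_add]; exact_mod_cast (Nat.add_choose_mul_factorial_mul_factorial j t)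
  have f1 : (j.factorial : ℝ) ≠ 0 := by exact_mod_cast j.factorial_ne_zero
  have f2 : (t.factorial : ℝ) ≠ 0 := by exact_mod_cast t.factorial_ne_zero
  have f3 : ((j + t).factorial : ℝ) ≠ 0 := by exact_mod_cast (j + t).factorial_ne_zero
  have f4 : (n2.factorial : ℝ) ≠ 0 := by exact_mod_cast n2.factorial_ne_zero
  have hgg : gg n2 (1 - 2 * (j : ℤ)) = 2 ^ n2 * n2.factorial / PP n2 (1 - 2 * (j : ℤ)) := by
    rw [eq_div_iff hP, hg]
  have e1 : (cc (n2 + 1) j : ℝ) = 2 ^ j * FF (n2 + 1) j / j.factorial := by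
    rw [eq_div_iff f1, ← hc1]; ring
  have e2 : (cc (j + t) t : ℝ) = 2 ^ t * FF (j + t) t / t.factorial := by
    rw [eq_div_iff f2, ← hc2]; ring
  have e3 : ((j + t).choose j : ℝ) = (j + t).factorial / (j.factorial * t.factorial) := by
    rw [eq_div_iff (by positivity), ← hch]; ring
  push_cast
  rw [hgg, e1, e2, e3, MM, ← hf]
  have hs : ((-1 : ℝ) ^ j) * (-1) ^ j = 1 := by rw [← mul_pow]; simp
  have key : (OO (n2 + 1) : ℝ) * OO j = (-1) ^ j * (PP n2 (1 - 2 * (j : ℤ)) * FF (n2 + 1) j) := by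
    rw [ha, ← mul_assoc, hs, one_mul]
  field_simp
  rw [pow_add]
  linear_combination (FF (j + t) t * 2 ^ j * 2 ^ t : ℝ) * key

lemma MM_b (n1 n2 i : ℕ) (hi : i ≤ n2) (h12 : n2 ≤ n1) :
    MM n1 n2 * (n2.choose i * gg n1 (-1 - 2 * (i : ℤ)))
      = (-1) ^ (i + 1) * 4 ^ (n1 - n2) * ((cc (n2 + 1) (n2 - i) * cc n1 i : ℤ) : ℝ) := by
  obtain ⟨t, rfl⟩ := Nat.exists_eq_add_of_le hi
  obtain ⟨k, rfl⟩ := Nat.exists_eq_add_of_le h12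
  rw [Nat.add_sub_cancel_left, Nat.add_sub_cancel_left]
  set n1 := i + t + k with hn1
  have hodd : Odd (-1 - 2 * (i : ℤ)) := ⟨-i - 1, by ring⟩
  have hP : (PP n1 (-1 - 2 * (i : ℤ)) : ℝ) ≠ 0 := by exact_mod_cast PP_ne n1 _ hodd
  have hg := gg_eq n1 _ hodd
  have ha : (PP n1 (-1 - 2 * (i : ℤ)) : ℝ) * FF n1 i = (-1) ^ (i + 1) * (OO n1 * OO (i + 1)) := by
    exact_mod_cast PP_b n1 i
  have hf : (FF (i + t + 1) t : ℝ) * OO (i + 1) = OO (i + t + 1) := by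
    have := FF_OO t (i + 1)
    rw [show t + (i + 1) = i + t + 1 by ring] at this; exact_mod_cast this
  have hc1 : (t.factorial : ℝ) * cc (i + t + 1) t = 2 ^ t * FF (i + t + 1) t := by exact_mod_cast cc_fact _ _
  have hc2 : (i.factorial : ℝ) * cc n1 i = 2 ^ i * FF n1 i := by exact_mod_cast cc_fact _ _
  have hch : ((i + t).choose i : ℝ) * i.factorial * t.factorial = (i + t).factorial := by
    rw [Nat.choose_symm_add]; exact_mod_cast (Nat.add_choose_mul_factorial_mul_factorial i t)
  have f1 : (i.factorial : ℝ) ≠ 0 := by exact_mod_cast i.factorial_ne_zero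
  have f2 : (t.factorial : ℝ) ≠ 0 := by exact_mod_cast t.factorial_ne_zero
  have f3 : ((i + t).factorial : ℝ) ≠ 0 := by exact_mod_cast (i + t).factorial_ne_zero
  have f4 : (n1.factorial : ℝ) ≠ 0 := by exact_mod_cast n1.factorial_ne_zero
  have hgg : gg n1 (-1 - 2 * (i : ℤ)) = 2 ^ n1 * n1.factorial / PP n1 (-1 - 2 * (i : ℤ)) := by
    rw [eq_div_iff hP, hg]
  have e1 : (cc (i + t + 1) t : ℝ) = 2 ^ t * FF (i + t + 1) t / t.factorial := by
    rw [eq_div_iff f2, ← hc1]; ring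
  have e2 : (cc n1 i : ℝ) = 2 ^ i * FF n1 i / i.factorial := by
    rw [eq_div_iff f1, ← hc2]; ring
  have e3 : ((i + t).choose i : ℝ) = (i + t).factorial / (i.factorial * t.factorial) := by
    rw [eq_div_iff (by positivity), ← hch]; ring
  push_cast
  rw [hgg, e1, e2, e3, MM, ← hf]
  have hs : ((-1 : ℝ) ^ (i + 1)) * (-1) ^ (i + 1) = 1 := by rw [← mul_pow]; simp
  have key : (OO n1 : ℝ) * OO (i + 1) = (-1) ^ (i + 1) * (PP n1 (-1 - 2 * (i : ℤ)) * FF n1 i) := by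
    rw [ha, ← mul_assoc, hs, one_mul]
  have h4 : (4 : ℝ) ^ k = 2 ^ k * 2 ^ k := by rw [← mul_pow]; norm_num
  have hp : (2 : ℝ) ^ n1 = 2 ^ i * 2 ^ t * 2 ^ k := by rw [hn1, pow_add, pow_add]
  rw [h4, hp, pow_add 2 i t]
  field_simp
  linear_combination (FF (i + t + 1) t : ℝ) * key

noncomputable def alpha (n1 n2 : ℕ) (x : ℝ) : ℝ :=
  ∑ j ∈ Finset.range (n1 + 1), (-1) ^ j * (n1.choose j * gg n2 (1 - 2 * (j : ℤ))) * x ^ j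

noncomputable def beta (n1 n2 : ℕ) (x : ℝ) : ℝ :=
  ∑ i ∈ Finset.range (n2 + 1), (-1) ^ (i + 1) * (n2.choose i * gg n1 (-1 - 2 * (i : ℤ))) * x ^ i

lemma one_sub_pow_sum (n : ℕ) (y : ℝ) :
    (1 - y) ^ n = ∑ i ∈ Finset.range (n + 1), (n.choose i : ℝ) * (-1) ^ i * y ^ i := by
  rw [sub_eq_neg_add, add_pow]
  apply Finset.sum_congr rfl
  intro i _
  rw [neg_pow]; simp; ring

noncomputable def Phi (n1 n2 : ℕ) (w s : ℝ) : ℝ :=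
  ∑ i ∈ Finset.range (n2 + 1), ∑ j ∈ Finset.range (n1 + 1),
    ((n2.choose i : ℝ) * (-1) ^ i) * ((n1.choose j : ℝ) * (-1) ^ j) * w ^ (2 * j) *
      (s ^ (2 * (i : ℤ) - 2 * j + 1) / (2 * (i : ℝ) - 2 * j + 1))

lemma odd_ne (i j : ℕ) : (2 * (i : ℝ) - 2 * j + 1) ≠ 0 := by
  have : (2 * (i : ℤ) - 2 * j + 1) ≠ 0 := by omega
  exact_mod_cast this

lemma Phi_deriv (n1 n2 : ℕ) (w s : ℝ) (hs : s ≠ 0) :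
    HasDerivAt (Phi n1 n2 w) ((1 - s ^ 2) ^ n2 * (1 - w ^ 2 / s ^ 2) ^ n1) s := by
  have : (1 - s ^ 2) ^ n2 * (1 - w ^ 2 / s ^ 2) ^ n1 =
    ∑ i ∈ Finset.range (n2 + 1), ∑ j ∈ Finset.range (n1 + 1),
    ((n2.choose i : ℝ) * (-1) ^ i) * ((n1.choose j : ℝ) * (-1) ^ j) * w ^ (2 * j) *
      s ^ (2 * (i : ℤ) - 2 * j) := by
    rw [one_sub_pow_sum, one_sub_pow_sum, Finset.sum_mul_sum]
    apply Finset.sum_congr rfl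
    intro i _
    apply Finset.sum_congr rfl
    intro j _
    have hz : s ^ (2 * (i : ℤ) - 2 * j) = (s ^ 2) ^ i / (s ^ 2) ^ j := by
      rw [zpow_sub₀ hs, zpow_mul, zpow_mul]
      simp only [zpow_natCast]
      norm_cast
    rw [hz, div_pow, ← pow_mul w]
    ring
  rw [this]
  unfold Phi
  apply HasDerivAt.fun_sum
  intro i _
  apply HasDerivAt.fun_sum
  intro j _
  apply HasDerivAt.const_mul
  have h := (hasDerivAt_zpow (2 * (i : ℤ) - 2 * j + 1) s (Or.inl hs)).div_const (2 * (i : ℝ) - 2 * j + 1)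
  convert h using 1
  push_cast
  rw [add_sub_cancel_right]
  have := odd_ne i j
  rw [mul_div_assoc, mul_div_cancel₀ _ this]

lemma Phi_one (n1 n2 : ℕ) (w : ℝ) : Phi n1 n2 w 1 = alpha n1 n2 (w ^ 2) := by
  unfold Phi alpha
  rw [Finset.sum_comm]
  apply Finset.sum_congr rfl
  intro j _
  rw [gg, Finset.mul_sum, Finset.mul_sum, Finset.sum_mul]
  apply Finset.sum_congr rfl
  intro i _
  rw [one_zpow, ← pow_mul]
  push_cast
  rw [show 2 * (i : ℝ) + (1 - 2 * j) = 2 * (i : ℝ) - 2 * j + 1 by ring]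
  ring

lemma Phi_w (n1 n2 : ℕ) (w : ℝ) (hw : w ≠ 0) : Phi n1 n2 w w = w * beta n1 n2 (w ^ 2) := by
  unfold Phi beta
  rw [Finset.mul_sum]
  apply Finset.sum_congr rfl
  intro i _
  rw [gg, Finset.mul_sum, Finset.mul_sum, Finset.sum_mul, Finset.mul_sum]
  apply Finset.sum_congr rfl
  intro j _
  have h1 : w ^ (2 * j) * w ^ (2 * (i : ℤ) - 2 * j + 1) = w * (w ^ 2) ^ i := by
    rw [zpow_add₀ hw, zpow_sub₀ hw, zpow_mul, zpow_mul, zpow_one, pow_mul]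
    simp only [zpow_natCast]
    norm_cast
    field_simp
  push_cast
  rw [show 2 * (j : ℝ) + (-1 - 2 * i) = -(2 * (i : ℝ) - 2 * j + 1) by ring]
  have := odd_ne i j
  rw [div_neg, pow_succ]
  calc _ = ((n2.choose i : ℝ) * (-1) ^ i) * ((n1.choose j : ℝ) * (-1) ^ j) *
      (w ^ (2 * j) * w ^ (2 * (i : ℤ) - 2 * j + 1)) / (2 * (i : ℝ) - 2 * j + 1) := by ring
    _ = _ := by rw [h1]; ring

lemma pade_mvt (n1 n2 : ℕ) (w : ℝ) (h0 : 0 < w) (h1 : w < 1) :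
    ∃ s, w < s ∧ s < 1 ∧ alpha n1 n2 (w ^ 2) - w * beta n1 n2 (w ^ 2)
      = (1 - w) * ((1 - s ^ 2) ^ n2 * (1 - w ^ 2 / s ^ 2) ^ n1) := by
  obtain ⟨s, hs, h⟩ := exists_hasDerivAt_eq_slope (Phi n1 n2 w)
    (fun s => (1 - s ^ 2) ^ n2 * (1 - w ^ 2 / s ^ 2) ^ n1) h1
    (fun s hs => (Phi_deriv n1 n2 w s (h0.trans_le (by have := hs.1; linarith)).ne').continuousAt.continuousWithinAt)
    (fun s hs => Phi_deriv n1 n2 w s (h0.trans_le (by have := hs.1; linarith)).ne')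
  refine ⟨s, hs.1, hs.2, ?_⟩
  rw [← Phi_one, ← Phi_w _ _ _ h0.ne']
  have : (1 - w) ≠ 0 := by linarith
  rw [h]; field_simp

lemma gg_abs (n : ℕ) (c : ℤ) (hc : Odd c) : |gg n c| ≤ 2 ^ n := by
  unfold gg
  refine (Finset.abs_sum_le_sum_abs _ _).trans ?_
  have : (2 : ℝ) ^ n = ∑ i ∈ Finset.range (n + 1), (n.choose i : ℝ) := by
    exact_mod_cast (Nat.sum_range_choose n).symm
  rw [this]
  apply Finset.sum_le_sum
  intro i _
  rw [abs_div, abs_mul, abs_pow, abs_neg, abs_one, one_pow, mul_one, Nat.abs_cast]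
  apply div_le_self (by positivity)
  have h : (1 : ℤ) ≤ |2 * (i : ℤ) + c| := by
    apply Int.one_le_abs
    obtain ⟨t, rfl⟩ := hc
    omega
  exact_mod_cast h

lemma beta_abs (n1 n2 : ℕ) (x : ℝ) (h0 : 0 ≤ x) (h1 : x ≤ 1) : |beta n1 n2 x| ≤ 2 ^ (n1 + n2) := by
  unfold beta
  refine (Finset.abs_sum_le_sum_abs _ _).trans ?_
  have : (2 : ℝ) ^ (n1 + n2) = ∑ i ∈ Finset.range (n2 + 1), (n2.choose i : ℝ) * 2 ^ n1 := by
    rw [← Finset.sum_mul, pow_add, mul_comm]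
    congr 1
    exact_mod_cast (Nat.sum_range_choose n2).symm
  rw [this]
  apply Finset.sum_le_sum
  intro i _
  rw [abs_mul, abs_mul, abs_mul, abs_pow, abs_neg, abs_one, one_pow, one_mul, Nat.abs_cast]
  have hg := gg_abs n1 (-1 - 2 * (i : ℤ)) ⟨-i - 1, by ring⟩
  have hx : |x ^ i| ≤ 1 := by
    rw [abs_of_nonneg (by positivity)]; exact pow_le_one₀ h0 h1
  calc (n2.choose i : ℝ) * |gg n1 (-1 - 2 * (i : ℤ))| * |x ^ i|
      ≤ (n2.choose i : ℝ) * 2 ^ n1 * 1 := by gcongr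
    _ = _ := by ring

lemma OO_central (n : ℕ) : (OO n : ℝ) * 2 ^ n = n.factorial * Nat.centralBinom n := by
  induction n with
  | zero => simp [OO]
  | succ n ih =>
    have h := Nat.succ_mul_centralBinom_succ n
    have h' : ((n : ℝ) + 1) * (Nat.centralBinom (n + 1) : ℝ) = 2 * (2 * n + 1) * Nat.centralBinom n := by
      exact_mod_cast h
    rw [OO_succ, Nat.factorial_succ]
    push_cast
    linear_combination 2 * (2 * (n : ℝ) + 1) * ih - n.factorial * h'

lemma central_le (n : ℕ) : (Nat.centralBinom n : ℝ) ≤ 4 ^ n := by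
  have h : Nat.centralBinom n ≤ 2 ^ (2 * n) := by
    rw [Nat.centralBinom]; exact Nat.choose_le_two_pow _ _
  rw [pow_mul] at h
  exact_mod_cast h

lemma MM_pos (n1 n2 : ℕ) : 0 < MM n1 n2 := by
  unfold MM
  have h1 : (0 : ℝ) < OO n1 := by exact_mod_cast OO_pos n1
  have h2 : (0 : ℝ) < OO (n2 + 1) := by exact_mod_cast OO_pos (n2 + 1)
  positivity

lemma MM_le (n1 n2 : ℕ) : MM n1 n2 ≤ (2 * n2 + 1) * 4 ^ n1 := by
  have h1 := OO_central n1
  have h2 := OO_central n2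
  have e : MM n1 n2 = (2 * n2 + 1) * Nat.centralBinom n1 * (Nat.centralBinom n2 / 4 ^ n2) := by
    unfold MM
    rw [OO_succ]
    push_cast
    have f1 : (n1.factorial : ℝ) ≠ 0 := by exact_mod_cast n1.factorial_ne_zero
    have f4 : (n2.factorial : ℝ) ≠ 0 := by exact_mod_cast n2.factorial_ne_zero
    have e4 : (4 : ℝ) ^ n2 = 2 ^ n2 * 2 ^ n2 := by rw [← mul_pow]; norm_num
    rw [e4]
    have c1 : (Nat.centralBinom n1 : ℝ) = OO n1 * 2 ^ n1 / n1.factorial := by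
      rw [eq_div_iff f1, h1]; ring
    have c2 : (Nat.centralBinom n2 : ℝ) = OO n2 * 2 ^ n2 / n2.factorial := by
      rw [eq_div_iff f4, h2]; ring
    rw [c1, c2]
    field_simp
  rw [e]
  have a1 := central_le n1
  have a2 : (Nat.centralBinom n2 : ℝ) / 4 ^ n2 ≤ 1 := by
    rw [div_le_one (by positivity)]; exact central_le n2
  calc _ ≤ (2 * (n2 : ℝ) + 1) * 4 ^ n1 * 1 := by gcongr
    _ = _ := by ring

/-- integer forms -/
def aI (n1 n2 : ℕ) (B L : ℤ) : ℤ :=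
  ∑ j ∈ Finset.range (n1 + 1), cc (n2 + 1) j * cc n1 (n1 - j) * B ^ j * L ^ (n1 - j)

def bI (n1 n2 : ℕ) (B L : ℤ) : ℤ :=
  ∑ i ∈ Finset.range (n2 + 1), cc (n2 + 1) (n2 - i) * cc n1 i * B ^ i * L ^ (n2 - i)

lemma aI_eq (n1 n2 : ℕ) (B L : ℤ) (hL : L ≠ 0) :
    MM n1 n2 * (L : ℝ) ^ n1 * alpha n1 n2 ((B : ℝ) / L) = aI n1 n2 B L := by
  unfold alpha aI
  rw [Finset.mul_sum]
  push_cast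
  apply Finset.sum_congr rfl
  intro j hj
  have hj' : j ≤ n1 := by simpa [Nat.lt_succ_iff] using hj
  have h := MM_a n1 n2 j hj'
  have hL' : (L : ℝ) ≠ 0 := by exact_mod_cast hL
  have hs : ((-1 : ℝ) ^ j) * (-1) ^ j = 1 := by rw [← mul_pow]; simp
  have e : (L : ℝ) ^ n1 = L ^ j * L ^ (n1 - j) := by rw [← pow_add]; congr 1; omega
  rw [e, div_pow]
  push_cast at h
  calc _ = (-1) ^ j * (MM n1 n2 * (n1.choose j * gg n2 (1 - 2 * (j : ℤ)))) * B ^ j * L ^ (n1 - j) := by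
        field_simp
    _ = _ := by rw [h, ← mul_assoc, hs, one_mul]

lemma bI_eq (n1 n2 : ℕ) (h12 : n2 ≤ n1) (B L : ℤ) (hL : L ≠ 0) :
    MM n1 n2 * (L : ℝ) ^ n2 * beta n1 n2 ((B : ℝ) / L) = 4 ^ (n1 - n2) * bI n1 n2 B L := by
  unfold beta bI
  rw [Finset.mul_sum]
  push_cast
  rw [Finset.mul_sum]
  apply Finset.sum_congr rfl
  intro j hj
  have hj' : j ≤ n2 := by simpa [Nat.lt_succ_iff] using hj
  have h := MM_b n1 n2 j hj' h12
  have hL' : (L : ℝ) ≠ 0 := by exact_mod_cast hL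
  have hs : ((-1 : ℝ) ^ (j + 1)) * (-1) ^ (j + 1) = 1 := by rw [← mul_pow]; simp
  have e : (L : ℝ) ^ n2 = L ^ j * L ^ (n2 - j) := by rw [← pow_add]; congr 1; omega
  rw [e, div_pow]
  push_cast at h
  calc _ = (-1) ^ (j + 1) * (MM n1 n2 * (n2.choose j * gg n1 (-1 - 2 * (j : ℤ)))) * B ^ j * L ^ (n2 - j) := by
        field_simp
    _ = ((-1) ^ (j + 1) * (-1) ^ (j + 1)) * (4 ^ (n1 - n2) * (cc (n2 + 1) (n2 - j) * cc n1 j * B ^ j * L ^ (n2 - j))) := by rw [h]; ring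
    _ = _ := by rw [hs, one_mul]

lemma aI_fact (n1 n2 : ℕ) (B L : ℤ) (hB : Even B) (hL : Odd L) :
    ∃ o : ℤ, Odd o ∧ (n1.factorial : ℤ) * aI n1 n2 B L = 2 ^ n1 * o := by
  refine ⟨∑ j ∈ Finset.range (n1 + 1), (n1.choose j : ℤ) * (FF (n2 + 1) j * FF n1 (n1 - j)) * B ^ j * L ^ (n1 - j), ?_, ?_⟩
  · rw [Finset.sum_range_succ']
    apply Even.add_odd
    · apply Finset.even_sum
      intro j _
      have : Even (B ^ (j + 1)) := hB.pow_of_ne_zero (by omega)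
      exact Even.mul_right (Even.mul_left this _) _
    · simp only [Nat.choose_zero_right, pow_zero, Nat.sub_zero, Nat.cast_one, one_mul, mul_one]
      exact ((FF_odd _ _).mul (FF_odd _ _)).mul (hL.pow)
  · unfold aI
    rw [Finset.mul_sum, Finset.mul_sum]
    apply Finset.sum_congr rfl
    intro j hj
    have hj' : j ≤ n1 := by simpa [Nat.lt_succ_iff] using hj
    have h1 := cc_fact (n2 + 1) j
    have h2 := cc_fact n1 (n1 - j)
    have h3 : (n1.factorial : ℤ) = n1.choose j * j.factorial * (n1 - j).factorial := by
      exact_mod_cast (Nat.choose_mul_factorial_mul_factorial hj').symm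
    have e : (2 : ℤ) ^ n1 = 2 ^ j * 2 ^ (n1 - j) := by rw [← pow_add]; congr 1; omega
    rw [h3, e]
    calc _ = (n1.choose j : ℤ) * (j.factorial * cc (n2 + 1) j) * ((n1 - j).factorial * cc n1 (n1 - j)) * B ^ j * L ^ (n1 - j) := by ring
      _ = _ := by rw [h1, h2]; ring

lemma I_ne (n1 n2 : ℕ) (B L W : ℤ) (hB : Even B) (hL : Odd L) (h12 : n2 ≤ n1) (h : n1 < 2 * (n1 - n2)) :
    aI n1 n2 B L - 4 ^ (n1 - n2) * bI n1 n2 B L * W ≠ 0 := by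
  intro h0
  obtain ⟨o, ho, h1⟩ := aI_fact n1 n2 B L hB hL
  have h2 : (2 : ℤ) ^ n1 * o = 4 ^ (n1 - n2) * (n1.factorial * (bI n1 n2 B L * W)) := by
    rw [← h1]; linear_combination (n1.factorial : ℤ) * h0
  have e : (4 : ℤ) ^ (n1 - n2) = 2 ^ n1 * (2 * 2 ^ (2 * (n1 - n2) - n1 - 1)) := by
    rw [show (4 : ℤ) = 2 ^ 2 by norm_num, ← pow_mul, ← pow_succ', ← pow_add]; congr 1; omega
  rw [e, mul_assoc] at h2
  have h3 := mul_left_cancel₀ (by positivity) h2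
  rw [h3] at ho
  rw [mul_assoc] at ho
  exact (Int.not_odd_iff_even.mpr (even_two_mul _)) ho

lemma amgm27 (u v : ℝ) (hu : 0 ≤ u) (hv : 0 ≤ v) : u ^ 2 * v ^ 5 ≤ 12500 / 823543 * (u + v) ^ 7 := by
  have h : 12500 * (u + v) ^ 7 - 823543 * (u ^ 2 * v ^ 5) =
    (5 * u - 2 * v) ^ 2 * (3125 * u ^ 0 * v ^ 5 + 37500 * u ^ 1 * v ^ 4 + 27708 * u ^ 2 * v ^ 3 + 13540 * u ^ 3 * v ^ 2 + 3900 * u ^ 4 * v ^ 1 + 500 * u ^ 5 * v ^ 0) := by ring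
  have : 0 ≤ (5 * u - 2 * v) ^ 2 * (3125 * u ^ 0 * v ^ 5 + 37500 * u ^ 1 * v ^ 4 + 27708 * u ^ 2 * v ^ 3 + 13540 * u ^ 3 * v ^ 2 + 3900 * u ^ 4 * v ^ 1 + 500 * u ^ 5 * v ^ 0) := by positivity
  linarith

lemma small1 (q : ℕ) (hq : 25 ≤ q) : (4 * (q : ℝ) + 1) * (3 / 5) ^ q ≤ 1 / 1000 := by
  induction q, hq using Nat.le_induction with
  | base => norm_num
  | succ q hq ih =>
    have : (25 : ℝ) ≤ q := by exact_mod_cast hq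
    have hp : (0 : ℝ) < (3 / 5) ^ q := by positivity
    rw [pow_succ]; push_cast
    nlinarith

lemma small2 (q : ℕ) (hq : 25 ≤ q) :
    (4 * (q : ℝ) + 1) * (3276800 * (33 / 100) ^ (q - 1)) ≤ 1 / 10 := by
  induction q, hq using Nat.le_induction with
  | base => norm_num
  | succ q hq ih =>
    obtain ⟨t, rfl⟩ : ∃ t, q = t + 1 := ⟨q - 1, by omega⟩
    have : (24 : ℝ) ≤ t := by
      have : 24 ≤ t := by omega
      exact_mod_cast this
    have hp : (0 : ℝ) < (33 / 100) ^ t := by positivity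
    simp only [Nat.add_sub_cancel] at *
    rw [pow_succ]; push_cast at *
    nlinarith

lemma T1 (q r : ℕ) (hq : 25 ≤ q) (hr : r ≤ 2) (l x M om E : ℝ) (hl4 : 400000 ≤ l) (hx0 : 0 < x)
    (hxlow : 15999 / 16000 ≤ x) (hM0 : 0 ≤ M) (hM : M ≤ (2 * (2 * q : ℕ) + 1) * 4 ^ (5 * q + r))
    (a0 : 0 ≤ om) (a1 : om ≤ 1 / 16000) (hE0 : 0 ≤ E)
    (hE : E ≤ (12500 / 823543 * (25 / l) ^ 7 / x ^ 5) ^ q * ((25 / l) / x) ^ r) :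
    M * l ^ (5 * q + r) * (om * E) ≤ 1 / 1000 := by
    have hlpos : 0 < l := by linarith
    have c1 : 4 ^ 5 * l ^ 5 * (12500 / 823543 * (25 / l) ^ 7 / x ^ 5) ≤ 3 / 5 := by
      have e : 4 ^ 5 * l ^ 5 * (12500 / 823543 * (25 / l) ^ 7 / x ^ 5)
        = (4 ^ 5 * 12500 * 25 ^ 7 / 823543) / (l ^ 2 * x ^ 5) := by field_simp
      rw [e, div_le_iff₀ (by positivity)]
      have h5 : (15999 / 16000 : ℝ) ^ 5 ≤ x ^ 5 := by gcongr
      have h6 : (400000 : ℝ) ^ 2 ≤ l ^ 2 := by gcongr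
      have h7 : (400000 : ℝ) ^ 2 * (15999 / 16000 : ℝ) ^ 5 ≤ l ^ 2 * x ^ 5 := by gcongr
      refine le_trans ?_ (mul_le_mul_of_nonneg_left h7 (by norm_num))
      norm_num
    have c2 : 4 * l * ((25 / l) / x) ≤ 101 := by
      have e : 4 * l * ((25 / l) / x) = 100 / x := by field_simp; norm_num
      rw [e, div_le_iff₀ hx0]; nlinarith
    have c3 : (4 * l * ((25 / l) / x)) ^ r ≤ 101 ^ 2 := by
      calc (4 * l * ((25 / l) / x)) ^ r ≤ 101 ^ r := by gcongr
        _ ≤ 101 ^ 2 := pow_le_pow_right₀ (by norm_num) hr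
    calc M * l ^ (5 * q + r) * (om * E)
        ≤ ((2 * (2 * q : ℕ) + 1) * 4 ^ (5 * q + r)) * l ^ (5 * q + r) * ((1 / 16000) *
          ((12500 / 823543 * (25 / l) ^ 7 / x ^ 5) ^ q * ((25 / l) / x) ^ r)) := by
          gcongr
      _ = (4 * q + 1) * (4 ^ 5 * l ^ 5 * (12500 / 823543 * (25 / l) ^ 7 / x ^ 5)) ^ q *
          (4 * l * ((25 / l) / x)) ^ r * (1 / 16000) := by
          rw [pow_add, pow_mul, pow_add, pow_mul, mul_pow (4 ^ 5 * l ^ 5), mul_pow (4 ^ 5),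
            mul_pow (4 * l), mul_pow 4 l]
          push_cast; ring
      _ ≤ (4 * q + 1) * (3 / 5) ^ q * 101 ^ 2 * (1 / 16000) := by gcongr
      _ ≤ 1 / 1000 := by
          have := small1 q hq
          nlinarith

lemma T2 (q r p : ℕ) (hq : 25 ≤ q) (hp : p + 1 = 2 * (3 * q + r)) (l M om E : ℝ) (hl4 : 400000 ≤ l)
    (hM0 : 0 ≤ M) (hM : M ≤ (2 * (2 * q : ℕ) + 1) * 4 ^ (5 * q + r))
    (a0 : 0 ≤ om) (a1 : om ≤ 25 / l ^ p) (hE0 : 0 ≤ E) (hE : E ≤ 2 ^ (5 * q + r + 2 * q)) :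
    M * l ^ (5 * q + r) * (om * E) ≤ 1 / 10 := by
    have hlpos : 0 < l := by linarith
    obtain ⟨t, ht⟩ : ∃ t, q = t + 1 := ⟨q - 1, by omega⟩
    calc M * l ^ (5 * q + r) * (om * E)
        ≤ ((2 * (2 * q : ℕ) + 1) * 4 ^ (5 * q + r)) * l ^ (5 * q + r) * (25 / l ^ p * 2 ^ ((5 * q + r) + 2 * q)) := by gcongr
      _ = (4 * q + 1) * (25 * 131072 * (131072 / l) ^ (q - 1) * (8 / l) ^ r) := by
          have e : l ^ p * l = l ^ (5 * q + r) * l ^ q * l ^ r := by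
            rw [← pow_succ, ← pow_add, ← pow_add]; congr 1; omega
          have e1 : 25 / l ^ p = 25 * l / (l ^ (5 * q + r) * l ^ q * l ^ r) := by
            rw [← e]; field_simp
          rw [e1]
          have e2 : (4 : ℝ) ^ (5 * q + r) * 2 ^ ((5 * q + r) + 2 * q) = 131072 ^ q * 8 ^ r := by
            rw [show (4 : ℝ) = 2 ^ 2 by norm_num, show (131072 : ℝ) = 2 ^ 17 by norm_num,
              show (8 : ℝ) = 2 ^ 3 by norm_num, ← pow_mul, ← pow_mul, ← pow_mul, ← pow_add, ← pow_add]
            congr 1; ring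
          have e3 : (131072 : ℝ) * (131072 / l) ^ (q - 1) = 131072 ^ q * l / l ^ q := by
            rw [ht, Nat.add_sub_cancel, div_pow, pow_succ, pow_succ]; field_simp
          have e4 : (25 : ℝ) * 131072 * (131072 / l) ^ (q - 1) = 25 * (131072 ^ q * l / l ^ q) := by
            rw [← e3]; ring
          rw [e4, div_pow]
          calc _ = (2 * ((2 * q : ℕ) : ℝ) + 1) * (4 ^ (5 * q + r) * 2 ^ ((5 * q + r) + 2 * q)) * l ^ (5 * q + r) * (25 * l / (l ^ (5 * q + r) * l ^ q * l ^ r)) := by ring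
            _ = _ := by
              rw [e2]; push_cast; field_simp; ring
      _ ≤ (4 * q + 1) * (25 * 131072 * (33 / 100) ^ (q - 1) * 1) := by
          have d1 : 131072 / l ≤ 33 / 100 := by
            rw [div_le_div_iff₀ hlpos (by norm_num)]; linarith
          have d2 : (8 / l) ^ r ≤ 1 := by
            apply pow_le_one₀ (by positivity)
            rw [div_le_one hlpos]; linarith
          gcongr
      _ ≤ 1 / 10 := by
          have := small2 q hq
          linarith

theorem pade_contra (L Y : ℤ) (q r p : ℕ) (hq : 25 ≤ q) (hr : r ≤ 2) (hp : p + 1 = 2 * (3 * q + r))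
    (hL : 400000 ≤ L) (hodd : Odd L) (h : 25 + (L - 25) * Y ^ 2 = L ^ p) : False := by
  wlog hY : 0 ≤ Y generalizing Y
  · exact this (-Y) (by rw [neg_sq]; exact h) (by omega)
  set n2 := 2 * q with hn2
  set n1 := 5 * q + r with hn1
  have h12 : n2 ≤ n1 := by omega
  have hk : n1 - n2 = 3 * q + r := by omega
  set k := 3 * q + r with hkdef
  have hne := I_ne n1 n2 (L - 25) L ((L - 25) * Y) (by
    obtain ⟨t, rfl⟩ := hodd; exact ⟨t - 12, by ring⟩) hodd h12 (by omega)
  have hge : (1 : ℝ) ≤ |((aI n1 n2 (L - 25) L - 4 ^ (n1 - n2) * bI n1 n2 (L - 25) L * ((L - 25) * Y) : ℤ) : ℝ)| := by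
    exact_mod_cast Int.one_le_abs hne
  set l : ℝ := (L : ℝ) with hl
  have hl4 : (400000 : ℝ) ≤ l := by rw [hl]; exact_mod_cast hL
  have hlpos : 0 < l := by linarith
  set x : ℝ := (l - 25) / l with hx
  have hx0 : 0 < x := by apply div_pos <;> linarith
  have hz : 1 - x = 25 / l := by rw [hx]; field_simp; ring
  have hzpos : 0 < 25 / l := by positivity
  have hx1 : x < 1 := by linarith
  set w := Real.sqrt x with hw
  have hw2 : w ^ 2 = x := Real.sq_sqrt hx0.le
  have hw0 : 0 < w := Real.sqrt_pos.mpr hx0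
  have hw1 : w < 1 := by
    by_contra hc; push Not at hc; nlinarith
  have hxw : x ≤ w := by nlinarith
  have hYr : (0 : ℝ) ≤ Y := by exact_mod_cast hY
  set om : ℝ := (l - 25) * Y / l ^ k with hom
  have hom0 : 0 ≤ om := by
    apply div_nonneg (mul_nonneg (by linarith) hYr) (by positivity)
  have hreal : 25 + (l - 25) * (Y : ℝ) ^ 2 = l ^ p := by rw [hl]; exact_mod_cast h
  have hom2 : om ^ 2 = x - x * (25 / l ^ p) := by
    have e0 : ((l - 25) * (Y : ℝ)) ^ 2 = (l - 25) * (l ^ p - 25) := by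
      linear_combination (l - 25) * hreal
    have hlp : l ^ p ≠ 0 := by positivity
    rw [hom, hx, div_pow, ← pow_mul, mul_comm k 2, ← hp, e0, pow_succ]
    field_simp
  have hdiff0 : om ≤ w := by
    apply le_of_sq_le_sq _ hw0.le
    rw [hom2, hw2]
    have : 0 ≤ x * (25 / l ^ p) := by positivity
    linarith
  have hdiff : w - om ≤ 25 / l ^ p := by
    have e : (w - om) * (w + om) = x * (25 / l ^ p) := by
      linear_combination hw2 - hom2
    have h3 : 0 ≤ 25 / l ^ p := by positivity
    have h4 : (w - om) * w ≤ (25 / l ^ p) * w := by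
      calc (w - om) * w ≤ (w - om) * (w + om) := by
            apply mul_le_mul_of_nonneg_left <;> linarith
        _ = x * (25 / l ^ p) := e
        _ ≤ w * (25 / l ^ p) := by gcongr
        _ = _ := by ring
    exact le_of_mul_le_mul_right h4 hw0
  obtain ⟨s, hs0, hs1, hmvt⟩ := pade_mvt n1 n2 w hw0 hw1
  rw [hw2] at hmvt
  have ha := aI_eq n1 n2 (L - 25) L (by omega)
  have hb := bI_eq n1 n2 h12 (L - 25) L (by omega)
  have hxx : (((L - 25 : ℤ) : ℝ) / (L : ℝ)) = x := by push_cast; rfl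
  rw [hxx] at ha hb
  have hMpos := MM_pos n1 n2
  have hMle := MM_le n1 n2
  have hI : ((aI n1 n2 (L - 25) L - 4 ^ (n1 - n2) * bI n1 n2 (L - 25) L * ((L - 25) * Y) : ℤ) : ℝ)
      = MM n1 n2 * l ^ n1 * ((alpha n1 n2 x - w * beta n1 n2 x) + (w - om) * beta n1 n2 x) := by
    push_cast
    rw [← ha, ← hb]
    have : l ^ n1 = l ^ n2 * l ^ k := by rw [← pow_add]; congr 1; omega
    have e2 : l ^ k * om = (l - 25) * Y := by rw [hom]; field_simp
    rw [← hl]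
    rw [← e2]
    rw [this]; ring
  rw [hI, hmvt] at hge
  have hbeta := beta_abs n1 n2 x hx0.le hx1.le
  -- bound of the MVT term
  have hsx : x < s ^ 2 := by rw [← hw2]; gcongr
  have hs2 : s ^ 2 < 1 := by nlinarith
  set y := s ^ 2 with hy
  have hu : 0 ≤ 1 - y := by linarith
  have hv : 0 ≤ y - x := by linarith
  have hv1 : 1 - x / y ≤ (y - x) / x := by
    have hy0 : y ≠ 0 := by linarith
    have : 1 - x / y = (y - x) / y := by rw [sub_div, div_self hy0]
    rw [this]
    apply div_le_div_of_nonneg_left hv hx0 hsx.le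
  have hv0 : 0 ≤ 1 - x / y := by
    rw [sub_nonneg, div_le_one (by linarith)]; exact hsx.le
  have hpw : (1 - y) ^ n2 * (1 - x / y) ^ n1 ≤
      (12500 / 823543 * (25 / l) ^ 7 / x ^ 5) ^ q * ((25 / l) / x) ^ r := by
    calc (1 - y) ^ n2 * (1 - x / y) ^ n1 ≤ (1 - y) ^ n2 * ((y - x) / x) ^ n1 := by gcongr
      _ = ((1 - y) ^ 2 * (y - x) ^ 5 / x ^ 5) ^ q * ((y - x) / x) ^ r := by
        rw [hn1, hn2, pow_add, pow_mul, pow_mul, div_pow (y - x) x 5, ← mul_assoc, ← mul_pow, mul_div_assoc]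
      _ ≤ _ := by
        have h1 := amgm27 (1 - y) (y - x) hu hv
        have e1 : (1 - y) + (y - x) = 25 / l := by rw [← hz]; ring
        rw [e1] at h1
        have h2 : y - x ≤ 25 / l := by linarith
        gcongr
  have hxlow : (15999 / 16000 : ℝ) ≤ x := by
    have : 25 / l ≤ 1 / 16000 := by
      rw [div_le_div_iff₀ hlpos (by norm_num)]; linarith
    linarith
  have hz16 : 25 / l ≤ 1 / 16000 := by
    rw [div_le_div_iff₀ hlpos (by norm_num)]; linarith
  have hT1 : MM n1 n2 * l ^ n1 * ((1 - w) * ((1 - y) ^ n2 * (1 - x / y) ^ n1)) ≤ 1 / 1000 := by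
    have a0 : 0 ≤ 1 - w := by linarith
    have a1 : 1 - w ≤ 1 / 16000 := by linarith
    have hE : 0 ≤ (1 - y) ^ n2 * (1 - x / y) ^ n1 := by positivity
    exact T1 q r hq hr l x _ _ _ hl4 hx0 hxlow hMpos.le hMle a0 a1 hE hpw
  have hT2 : MM n1 n2 * l ^ n1 * ((w - om) * |beta n1 n2 x|) ≤ 1 / 10 :=
    T2 q r p hq hp l _ _ _ hl4 hMpos.le hMle (by linarith) hdiff (abs_nonneg _) hbeta
  have hfin : |MM n1 n2 * l ^ n1 * ((1 - w) * ((1 - y) ^ n2 * (1 - x / y) ^ n1) + (w - om) * beta n1 n2 x)|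
      ≤ 1 / 1000 + 1 / 10 := by
    rw [mul_add]
    refine (abs_add_le _ _).trans (add_le_add ?_ ?_)
    · rw [abs_of_nonneg]
      · exact hT1
      · have : 0 ≤ 1 - w := by linarith
        positivity
    · rw [abs_mul, abs_of_nonneg (by positivity), abs_mul, abs_of_nonneg (by linarith : 0 ≤ w - om)]
      exact hT2
  linarith

def RR (L : ℤ) : ℕ → ℤ
  | 0 => 1
  | 1 => 5
  | (n + 2) => 10 * RR L (n + 1) - L * RR L n

def chk (q c g : ℕ) : ℕ → ℕ → ℕ → ℕ → Bool
  | 0, _, a, b => (a == 1) && (b == 5 % q)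
  | (f + 1), n, a, b =>
    ((a != 5 % q) || (n % g != 29 % g)) && chk q c g f (n + 1) b ((10 * b + c * a) % q)

def stp (q c : ℕ) (s : ℕ × ℕ) : ℕ × ℕ := (s.2, (10 * s.2 + c * s.1) % q)

lemma chk_spec (q c g : ℕ) (f n : ℕ) (s : ℕ × ℕ) (h : chk q c g f n s.1 s.2 = true) :
    (stp q c)^[f] s = (1, 5 % q) ∧ ∀ i < f, (n + i) % g = 29 % g → ((stp q c)^[i] s).1 ≠ 5 % q := by
  induction f generalizing n s with
  | zero =>
    simp [chk] at h
    exact ⟨Prod.ext h.1 h.2, by simp⟩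
  | succ f ih =>
    simp only [chk, Bool.and_eq_true, Bool.or_eq_true, bne_iff_ne] at h
    obtain ⟨h1, h2⟩ := h
    obtain ⟨h3, h4⟩ := ih (n + 1) (stp q c s) h2
    refine ⟨by rw [Function.iterate_succ_apply]; exact h3, ?_⟩
    intro i hi hg
    cases i with
    | zero =>
      simp only [Nat.add_zero] at hg
      rcases h1 with h1 | h1
      · exact h1
      · exact absurd hg h1
    | succ i =>
      rw [Function.iterate_succ_apply]
      exact h4 i (by omega) (by rw [← hg]; congr 1; ring)

lemma stp_RR (q c : ℕ) (L : ℤ) (hq : 1 < q) (hc : (c : ℤ) ≡ -L [ZMOD q]) (n : ℕ) :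
    (((stp q c)^[n] (1, 5 % q)).1 : ℤ) = RR L n % q ∧ (((stp q c)^[n] (1, 5 % q)).2 : ℤ) = RR L (n + 1) % q := by
  induction n with
  | zero =>
    refine ⟨?_, ?_⟩
    · simp [RR]; rw [Int.emod_eq_of_lt] <;> omega
    · simp [RR]
  | succ n ih =>
    rw [Function.iterate_succ_apply']
    refine ⟨?_, ?_⟩
    · simp only [stp]; exact ih.2
    · simp only [stp]
      push_cast
      rw [ih.1, ih.2]
      have : RR L (n + 1 + 1) = 10 * RR L (n + 1) - L * RR L n := rfl
      rw [this]
      show _ ≡ _ [ZMOD q]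
      have e : 10 * RR L (n + 1) - L * RR L n = 10 * RR L (n + 1) + (-L) * RR L n := by ring
      rw [e]
      exact ((Int.mod_modEq _ _).mul_left 10).add (hc.mul (Int.mod_modEq _ _))

lemma chk_RR (q P g r : ℕ) (L : ℤ) (n : ℕ) (hq : 1 < q) (hr : r < q) (hL : L % q = r) (hgP : g ∣ P) (hg40 : g ∣ 40)
    (hP : 0 < P) (h : chk q (q - r) g P 0 1 (5 % q) = true) (hn : n % 40 = 29) : RR L n ≠ 5 := by
  intro hR
  obtain ⟨h1, h2⟩ := chk_spec q (q - r) g P 0 (1, 5 % q) h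
  have hc : ((q - r : ℕ) : ℤ) ≡ -L [ZMOD q] := by
    rw [Nat.cast_sub hr.le, ← hL]
    have : (q : ℤ) - L % q = - L + (1 + L / q) * q := by
      have := Int.mul_ediv_add_emod L q
      linear_combination -this
    rw [this]
    exact (Int.modEq_iff_dvd.mpr ⟨-(1 + L / q), by ring⟩)
  have hper : ∀ t, (stp q (q - r))^[P * t] (1, 5 % q) = (1, 5 % q) := by
    intro t
    rw [Function.iterate_mul]
    exact Function.iterate_fixed h1 t
  have h3 := (stp_RR q (q - r) L hq hc n).1
  have hn' : n = n % P + P * (n / P) := (Nat.mod_add_div n P).symm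
  rw [hn', Function.iterate_add_apply, hper, ← hn', hR] at h3
  refine h2 (n % P) (Nat.mod_lt _ hP) ?_ ?_
  · rw [Nat.zero_add, Nat.mod_mod_of_dvd _ hgP, ← Nat.mod_mod_of_dvd n hg40, hn]
  · exact_mod_cast h3

def maskOK (t : ℕ × ℕ × ℕ × ℕ) : Bool :=
  (decide (1 < t.1)) && (decide (0 < t.2.1)) && (t.2.1 % t.2.2.1 == 0) && (40 % t.2.2.1 == 0) &&
  (List.range t.1).all (fun r => !(t.2.2.2.testBit r) || chk t.1 (t.1 - r) t.2.2.1 t.2.1 0 1 (5 % t.1))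

lemma maskOK_RR (t : ℕ × ℕ × ℕ × ℕ) (h : maskOK t = true) (L n : ℕ) (hL : t.2.2.2.testBit (L % t.1) = true)
    (hn : n % 40 = 29) : RR L n ≠ 5 := by
  obtain ⟨q, P, g, m⟩ := t
  simp only [maskOK, Bool.and_eq_true, decide_eq_true_eq, beq_iff_eq, List.all_eq_true, Bool.or_eq_true,
    List.mem_range] at h
  obtain ⟨⟨⟨⟨h1, h2⟩, h3⟩, h4⟩, h5⟩ := h
  have hlt : L % q < q := Nat.mod_lt _ (by omega)
  rcases h5 (L % q) hlt with h6 | h6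
  · simp only at hL
    rw [hL] at h6
    simp at h6
  · exact chk_RR q P g (L % q) L n h1 hlt (by norm_cast) (Nat.dvd_of_mod_eq_zero h3) (Nat.dvd_of_mod_eq_zero h4) h2 h6 hn

def masks : List (ℕ × ℕ × ℕ × ℕ) :=
  [(11, 120, 40, 2044),
   (17, 288, 8, 114672),
   (101, 100, 20, 130615544076329052127069019006),
   (61, 60, 20, 581021408280256104),
   (41, 40, 40, 62003413172),
   (71, 70, 10, 832204909870296311520),
   (113, 112, 8, 7063528614931559248429677220880008),
   (3, 8, 8, 4),
   (31, 30, 10, 297241280),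
   (97, 96, 8, 43406251046430597019004002824),
   (131, 130, 10, 1030503984899062618474859489748963390000),
   (7, 48, 8, 66)]

lemma masks_ok : masks.all maskOK = true := by decide +kernel

def killed (L : ℕ) : Bool := masks.any (fun t => t.2.2.2.testBit (L % t.1))

def allR : ℕ → ℕ → Bool
  | 0, lo => killed (16 * lo + 3)
  | (d + 1), lo => allR d (2 * lo) && allR d (2 * lo + 1)

lemma allR_spec (d lo : ℕ) (h : allR d lo = true) (t : ℕ) (h1 : lo * 2 ^ d ≤ t) (h2 : t < (lo + 1) * 2 ^ d) :
    killed (16 * t + 3) = true := by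
  induction d generalizing lo with
  | zero =>
    have : t = lo := by simp at h1 h2; omega
    rw [this]; exact h
  | succ d ih =>
    simp only [allR, Bool.and_eq_true] at h
    rw [pow_succ] at h1 h2
    by_cases hc : t < (2 * lo + 1) * 2 ^ d
    · exact ih _ h.1 (by nlinarith) hc
    · exact ih _ h.2 (by omega) (by nlinarith)

lemma range_ok : (List.range 98).all (allR 8) = true := by decide +kernel

lemma chk32 : maskOK (32, 16, 8, 2 ^ 7 + 2 ^ 11 + 2 ^ 15 + 2 ^ 23 + 2 ^ 27 + 2 ^ 31) = true := by decide +kernel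

lemma killed_RR (L n : ℕ) (h : killed L = true) (hn : n % 40 = 29) : RR L n ≠ 5 := by
  obtain ⟨t, ht, h1⟩ := List.any_eq_true.mp h
  exact maskOK_RR t (List.all_eq_true.mp masks_ok t ht) L n h1 hn

theorem sieve (L n : ℕ) (hL : L < 400000) (h4 : L % 4 = 3) (hn : n % 40 = 29) : RR L n ≠ 5 := by
  by_cases h16 : L % 16 = 3
  · have hLt : L = 16 * (L / 16) + 3 := by omega
    rw [hLt]
    apply killed_RR _ _ _ hn
    set t := L / 16 with ht
    have htl : t < 25000 := by omega
    have := List.all_eq_true.mp range_ok (t / 256) (List.mem_range.mpr (by omega))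
    exact allR_spec 8 (t / 256) this t (by norm_num; omega) (by norm_num; omega)
  · apply maskOK_RR _ chk32 _ _ _ hn
    have : L % 32 = 7 ∨ L % 32 = 11 ∨ L % 32 = 15 ∨ L % 32 = 23 ∨ L % 32 = 27 ∨ L % 32 = 31 := by omega
    show (2 ^ 7 + 2 ^ 11 + 2 ^ 15 + 2 ^ 23 + 2 ^ 27 + 2 ^ 31).testBit (L % 32) = true
    rcases this with h | h | h | h | h | h <;> rw [h] <;> decide

/-- fixed index -/
def fixc (q n : ℕ) : Bool := (List.range q).all (fun r => ((stp q (q - r))^[n] (1, 5 % q)).1 != 5 % q)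

lemma fix_RR (q n : ℕ) (hq : 1 < q) (h : fixc q n = true) (L : ℕ) : RR L n ≠ 5 := by
  intro hR
  have hlt : L % q < q := Nat.mod_lt _ (by omega)
  have h1 := List.all_eq_true.mp h (L % q) (List.mem_range.mpr hlt)
  simp only [bne_iff_ne] at h1
  have hc : ((q - L % q : ℕ) : ℤ) ≡ -L [ZMOD q] := by
    rw [Nat.cast_sub hlt.le]
    push_cast
    have : (q : ℤ) - L % q = - L + (1 + L / q) * q := by
      have := Int.mul_ediv_add_emod L q
      linear_combination -this
    rw [this]
    exact (Int.modEq_iff_dvd.mpr ⟨-(1 + L / q), by ring⟩)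
  have h3 := (stp_RR q (q - L % q) L hq hc n).1
  rw [hR] at h3
  exact h1 (by exact_mod_cast h3)

theorem sieve29 (L : ℕ) : RR L 29 ≠ 5 := fix_RR 7 29 (by norm_num) (by decide +kernel) L
theorem sieve69 (L : ℕ) : RR L 69 ≠ 5 := fix_RR 19 69 (by norm_num) (by decide +kernel) L
theorem sieve109 (L : ℕ) : RR L 109 ≠ 5 := fix_RR 43 109 (by norm_num) (by decide +kernel) L

/-! Elementary part -/

def SS (A B : ℤ) (m : ℕ) : ℤ := ∑ j ∈ Finset.range (m + 1), ((2 * m + 1).choose (2 * j) : ℤ) * A ^ (m - j) * (-B) ^ j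

lemma sum_range_two_mul {M : Type*} [AddCommMonoid M] (f : ℕ → M) (N : ℕ) :
    ∑ k ∈ Finset.range (2 * N), f k = ∑ j ∈ Finset.range N, (f (2 * j) + f (2 * j + 1)) := by
  induction N with
  | zero => simp
  | succ N ih =>
    rw [show 2 * (N + 1) = 2 * N + 1 + 1 by ring, Finset.sum_range_succ, Finset.sum_range_succ, ih,
      Finset.sum_range_succ, add_assoc]

lemma sqrtd_pow_even (d : ℤ) (j : ℕ) : (Zsqrtd.sqrtd : ℤ√d) ^ (2 * j) = ((d ^ j : ℤ) : ℤ√d) := by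
  rw [pow_mul]
  have : (Zsqrtd.sqrtd : ℤ√d) ^ 2 = (d : ℤ√d) := by
    rw [sq]; ext <;> simp
  rw [this]; push_cast; rfl

lemma re_sum {d : ℤ} (s : Finset ℕ) (f : ℕ → ℤ√d) : (∑ j ∈ s, f j).re = ∑ j ∈ s, (f j).re := by
  induction s using Finset.cons_induction with
  | empty => simp
  | cons a s ha ih => rw [Finset.sum_cons, Finset.sum_cons, ← ih]; rfl

lemma re_pow (a B : ℤ) (m : ℕ) : ((⟨a, 1⟩ : ℤ√(-B)) ^ (2 * m + 1)).re = a * SS (a ^ 2) B m := by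
  have h : (⟨a, 1⟩ : ℤ√(-B)) = Zsqrtd.sqrtd + (a : ℤ√(-B)) := by ext <;> simp
  rw [h, add_pow, show 2 * m + 1 + 1 = 2 * (m + 1) by ring, sum_range_two_mul, re_sum, SS, Finset.mul_sum]
  apply Finset.sum_congr rfl
  intro j hj
  have hj' : j ≤ m := by have := Finset.mem_range.mp hj; omega
  have e1 : (Zsqrtd.sqrtd : ℤ√(-B)) ^ (2 * j) * (a : ℤ√(-B)) ^ (2 * m + 1 - 2 * j) * (((2 * m + 1).choose (2 * j) : ℕ) : ℤ√(-B))
      = (((-B) ^ j * a ^ (2 * m + 1 - 2 * j) * ((2 * m + 1).choose (2 * j) : ℕ) : ℤ) : ℤ√(-B)) := by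
    rw [sqrtd_pow_even]; push_cast; rfl
  have e2 : (Zsqrtd.sqrtd : ℤ√(-B)) ^ (2 * j + 1) * (a : ℤ√(-B)) ^ (2 * m + 1 - (2 * j + 1)) * (((2 * m + 1).choose (2 * j + 1) : ℕ) : ℤ√(-B))
      = (((-B) ^ j * a ^ (2 * m + 1 - (2 * j + 1)) * ((2 * m + 1).choose (2 * j + 1) : ℕ) : ℤ) : ℤ√(-B)) * Zsqrtd.sqrtd := by
    rw [pow_succ, sqrtd_pow_even]; push_cast; ring
  rw [e1, e2]
  have e3 : 2 * m + 1 - 2 * j = 2 * (m - j) + 1 := by omega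
  rw [Zsqrtd.re_add, Zsqrtd.re_intCast, Zsqrtd.re_mul, e3, ← pow_mul, Zsqrtd.re_intCast, Zsqrtd.im_intCast,
    Zsqrtd.re_sqrtd]
  ring

lemma SS_mod_p (A B : ℤ) (m : ℕ) (hp : (2 * m + 1).Prime) : ((2 * m + 1 : ℕ) : ℤ) ∣ SS A B m - A ^ m := by
  rw [SS, Finset.sum_range_succ']
  simp only [Nat.mul_zero, Nat.choose_zero_right, pow_zero, Nat.sub_zero]
  push_cast
  have : ∑ k ∈ Finset.range m, ((2 * m + 1).choose (2 * (k + 1)) : ℤ) * A ^ (m - (k + 1)) * (-B) ^ (k + 1) + 1 * A ^ m * 1 - A ^ m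
    = ∑ k ∈ Finset.range m, ((2 * m + 1).choose (2 * (k + 1)) : ℤ) * A ^ (m - (k + 1)) * (-B) ^ (k + 1) := by ring
  rw [this]
  apply Finset.dvd_sum
  intro k hk
  have hk := Finset.mem_range.mp hk
  have h := hp.dvd_choose_self (k := 2 * (k + 1)) (by omega) (by omega)
  rw [mul_assoc]
  apply Dvd.dvd.mul_right
  exact_mod_cast h

lemma SS_mod_four (A B : ℤ) (m : ℕ) (hA : A % 4 = 1) (hB : B % 4 = 2) (hm : m % 2 = 1) : SS A B m % 4 = 3 := by
  obtain ⟨k, rfl⟩ : ∃ k, m = k + 1 := ⟨m - 1, by omega⟩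
  rw [SS, Finset.sum_range_succ', Finset.sum_range_succ']
  have h4 : (4 : ℤ) ∣ ∑ j ∈ Finset.range k, ((2 * (k + 1) + 1).choose (2 * (j + 1 + 1)) : ℤ) * A ^ (k + 1 - (j + 1 + 1)) * (-B) ^ (j + 1 + 1) := by
    apply Finset.dvd_sum
    intro j _
    apply Dvd.dvd.mul_left
    have : (4 : ℤ) ∣ B ^ 2 := by
      obtain ⟨c, hc⟩ : (2 : ℤ) ∣ B := by omega
      exact ⟨c ^ 2, by rw [hc]; ring⟩
    rw [show (-B) ^ (j + 1 + 1) = (-B) ^ j * B ^ 2 by ring]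
    exact this.mul_left _
  have hA4 : ∀ i : ℕ, A ^ i ≡ 1 [ZMOD 4] := fun i => by
    have : A ≡ 1 [ZMOD 4] := hA
    simpa using this.pow i
  have hch : ((2 * (k + 1) + 1).choose (2 * (0 + 1)) : ℤ) = (2 * k + 3) * (k + 1) := by
    have : (2 * (k + 1) + 1).choose (2 * (0 + 1)) = (2 * k + 3) * (k + 1) := by
      rw [Nat.choose_two_right]
      rw [show (2 * (k + 1) + 1) * (2 * (k + 1) + 1 - 1) = 2 * ((2 * k + 3) * (k + 1)) by
        rw [Nat.add_sub_cancel]; ring]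
      omega
    rw [this]; push_cast; ring
  rw [hch]
  obtain ⟨c, hc⟩ := h4
  rw [hc]
  obtain ⟨s, hs⟩ : ∃ s, k = 2 * s := ⟨k / 2, by omega⟩
  obtain ⟨b, hb⟩ : ∃ b, B = 4 * b + 2 := ⟨B / 4, by omega⟩
  obtain ⟨u, hu⟩ := (hA4 k).symm.dvd
  obtain ⟨v, hv⟩ := (hA4 (k + 1)).symm.dvd
  have e1 : A ^ k = 1 + 4 * u := by linarith
  have e2 : A ^ (k + 1) = 1 + 4 * v := by linarith
  simp only [Nat.mul_zero, Nat.choose_zero_right, Nat.sub_zero, pow_zero, Nat.zero_add, Nat.add_sub_cancel, pow_one]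
  rw [e1, e2, hb, hs]
  push_cast
  have : 4 * c + (2 * (2 * (s : ℤ)) + 3) * (2 * s + 1) * (1 + 4 * u) * -(4 * b + 2) + 1 * (1 + 4 * v) * 1
    = 4 * (c + v - b * ((2 * (2 * (s : ℤ)) + 3) * (2 * s + 1) * (1 + 4 * u)) - 2 * u * (2 * (2 * (s : ℤ)) + 3) * (2 * s + 1)
      - (4 * s ^ 2 + 5 * s + 2)) + 3 := by ring
  rw [this]; omega

lemma lt_pow_aux (q i : ℕ) (hq : 3 ≤ q) (hi : 1 ≤ i) : 2 * i + 1 < q ^ (2 * i) := by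
  have h1 : 3 ^ (2 * i) ≤ q ^ (2 * i) := Nat.pow_le_pow_left hq _
  have h2 : 2 * i + 1 < 3 ^ (2 * i) := by
    induction i, hi using Nat.le_induction with
    | base => norm_num
    | succ i hi ih =>
      have := ih (Nat.pow_le_pow_left hq _)
      rw [show 2 * (i + 1) = 2 * i + 2 by ring, pow_add]; omega
  omega

lemma term_dvd (q m i t : ℕ) (hq : q.Prime) (hq3 : 3 ≤ q) (hi : 1 ≤ i) (him : i ≤ m) (ht : q ^ t ∣ m) :
    q ^ (t + 1) ∣ (2 * m + 1).choose (2 * i + 1) * q ^ (2 * i) := by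
  have := Fact.mk hq
  have hC : (2 * m + 1).choose (2 * i + 1) ≠ 0 := (Nat.choose_pos (by omega)).ne'
  have h1 : (2 * m + 1) * (2 * m).choose (2 * i) = (2 * m + 1).choose (2 * i + 1) * (2 * i + 1) :=
    Nat.add_one_mul_choose_eq _ _
  have h2 : (2 * m) * (2 * m - 1).choose (2 * i - 1) = (2 * m).choose (2 * i) * (2 * i) := by
    have := Nat.add_one_mul_choose_eq (2 * m - 1) (2 * i - 1)
    rwa [show 2 * m - 1 + 1 = 2 * m by omega, show 2 * i - 1 + 1 = 2 * i by omega] at this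
  have h3 : (2 * m + 1).choose (2 * i + 1) * ((2 * i + 1) * (2 * i)) = m * (2 * (2 * m + 1) * (2 * m - 1).choose (2 * i - 1)) := by
    calc _ = ((2 * m + 1) * (2 * m).choose (2 * i)) * (2 * i) := by rw [h1]; ring
      _ = (2 * m + 1) * ((2 * m) * (2 * m - 1).choose (2 * i - 1)) := by rw [h2]; ring
      _ = _ := by ring
  have h4 : q ^ t ∣ (2 * m + 1).choose (2 * i + 1) * ((2 * i + 1) * (2 * i)) := by
    rw [h3]; exact ht.mul_right _
  have hu : (2 * i + 1) * (2 * i) ≠ 0 := by positivity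
  have h5 : padicValNat q ((2 * i + 1) * (2 * i)) < 2 * i := by
    by_contra hcon
    have h6 : q ^ (2 * i) ∣ (2 * i + 1) * (2 * i) := (padicValNat_dvd_iff_le hu).mpr (by omega)
    have hlt := lt_pow_aux q i hq3 hi
    have hcop : Nat.Coprime (2 * i + 1) (2 * i) := by simp
    rcases em (q ∣ 2 * i) with hd | hd
    · have : Nat.Coprime (q ^ (2 * i)) (2 * i + 1) := by
        apply Nat.Coprime.pow_left
        exact (hcop.coprime_dvd_right hd).symm
      have := Nat.le_of_dvd (by omega) (this.dvd_of_dvd_mul_left h6)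
      omega
    · have : Nat.Coprime (q ^ (2 * i)) (2 * i) := by
        apply Nat.Coprime.pow_left
        exact (Nat.Prime.coprime_iff_not_dvd hq).mpr hd
      have := Nat.le_of_dvd (by omega) (this.dvd_of_dvd_mul_right h6)
      omega
  rw [padicValNat_dvd_iff_le (mul_ne_zero hC hu), padicValNat.mul hC hu] at h4
  rw [padicValNat_dvd_iff_le (mul_ne_zero hC (pow_ne_zero _ hq.ne_zero)), padicValNat.mul hC (pow_ne_zero _ hq.ne_zero),
    padicValNat.prime_pow]
  omega

lemma SS_q (q : ℕ) (B : ℤ) (m t : ℕ) (hq : q.Prime) (hq3 : 3 ≤ q) (hm : Even m) (ht : q ^ t ∣ m) :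
    ((q ^ (t + 1) : ℕ) : ℤ) ∣ SS ((q : ℤ) ^ 2) B m - (2 * m + 1) * B ^ m := by
  rw [SS, ← Finset.sum_range_reflect, Finset.sum_range_succ']
  simp only [Nat.add_sub_cancel, Nat.sub_zero, Nat.sub_self]
  have e0 : ((2 * m + 1).choose (2 * m) : ℤ) = 2 * m + 1 := by
    have : (2 * m + 1).choose (2 * m) = 2 * m + 1 := by simp
    rw [this]; push_cast; ring
  rw [e0, hm.neg_pow, pow_zero, mul_one, add_sub_cancel_right]
  apply Finset.dvd_sum
  intro i hi
  have hi := Finset.mem_range.mp hi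
  have h := term_dvd q m (i + 1) t hq hq3 (by omega) (by omega) ht
  have e1 : (2 * m + 1).choose (2 * (m - (i + 1))) = (2 * m + 1).choose (2 * (i + 1) + 1) := by
    rw [← Nat.choose_symm (by omega : 2 * (i + 1) + 1 ≤ 2 * m + 1)]
    congr 1; omega
  rw [e1, show m - (m - (i + 1)) = i + 1 by omega, ← pow_mul]
  apply Dvd.dvd.mul_right
  exact_mod_cast h

lemma q_contra (q e m : ℕ) (B : ℤ) (hq : q.Prime) (hq3 : 3 ≤ q) (hm : Even m) (hm0 : 0 < m) (hem : e ∣ m)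
    (heq : Nat.Coprime q e) (hB : (q : ℤ) ∣ B ^ e - 1) (h : SS ((q : ℤ) ^ 2) B m = 1) : False := by
  have := Fact.mk hq
  set t := padicValNat q m with ht
  have h1 : q ^ t ∣ m := pow_padicValNat_dvd
  have h2 : ¬ q ^ (t + 1) ∣ m := pow_succ_padicValNat_not_dvd hm0.ne'
  have h3 := SS_q q B m t hq hq3 hm h1
  rw [h] at h3
  obtain ⟨w, hw⟩ := hem
  have h4 : q ^ t ∣ w := by
    rw [hw] at h1
    exact (Nat.Coprime.pow_left t heq).dvd_of_dvd_mul_left h1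
  obtain ⟨z, hz⟩ := h4
  have h5 : ((q ^ (t + 1) : ℕ) : ℤ) ∣ B ^ m - 1 := by
    have := dvd_sub_pow_of_dvd_sub (R := ℤ) (p := q) hB t
    rw [hw, hz, pow_mul, pow_mul]
    push_cast
    rw [one_pow] at this
    have h6 := sub_dvd_pow_sub_pow ((B ^ e) ^ q ^ t) 1 z
    rw [one_pow] at h6
    exact this.trans h6
  have h6 : ((q ^ (t + 1) : ℕ) : ℤ) ∣ ((2 * m : ℕ) : ℤ) := by
    have := (h3.add (h5.mul_left (2 * m + 1)))
    have e : (1 - (2 * (m : ℤ) + 1) * B ^ m + (2 * m + 1) * (B ^ m - 1)) = -((2 * m : ℕ) : ℤ) := by push_cast; ring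
    rw [e] at this
    exact (dvd_neg).mp this
  have h7 : q ^ (t + 1) ∣ 2 * m := by exact_mod_cast h6
  apply h2
  have hc : Nat.Coprime (q ^ (t + 1)) 2 := by
    apply Nat.Coprime.pow_left
    rw [Nat.coprime_primes hq Nat.prime_two]; omega
  exact hc.dvd_of_dvd_mul_left h7

lemma RR_eq (L : ℤ) (n : ℕ) : RR L n = ((⟨5, 1⟩ : ℤ√(-(L - 25))) ^ n).re ∧ RR L (n + 1) = ((⟨5, 1⟩ : ℤ√(-(L - 25))) ^ (n + 1)).re := by
  induction n with
  | zero => simp [RR]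
  | succ n ih =>
    refine ⟨ih.2, ?_⟩
    have : RR L (n + 1 + 1) = 10 * RR L (n + 1) - L * RR L n := rfl
    rw [this, ih.1, ih.2, pow_succ _ (n + 1), pow_succ _ n]
    simp only [Zsqrtd.re_mul, Zsqrtd.im_mul]
    ring

lemma norm_pow_eq (a B : ℤ) (n : ℕ) : ((⟨a, 1⟩ : ℤ√(-B)) ^ n).re ^ 2 + B * ((⟨a, 1⟩ : ℤ√(-B)) ^ n).im ^ 2 = (a ^ 2 + B) ^ n := by
  induction n with
  | zero => simp
  | succ n ih =>
    rw [pow_succ _ n, pow_succ (a ^ 2 + B) n, ← ih]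
    simp only [Zsqrtd.re_mul, Zsqrtd.im_mul]
    ring

lemma hard_case (B : ℤ) (p : ℕ) (hB0 : 0 < B) (hB : B % 4 = 2) (hp : p % 40 = 29)
    (h : ((⟨5, 1⟩ : ℤ√(-B)) ^ p).re = 5) : False := by
  have hR : RR (25 + B) p = 5 := by
    rw [(RR_eq _ _).1]
    have : 25 + B - 25 = B := by ring
    rw [this]; exact h
  obtain ⟨L, hL⟩ : ∃ L : ℕ, (L : ℤ) = 25 + B := ⟨(25 + B).toNat, Int.toNat_of_nonneg (by omega)⟩
  rw [← hL] at hR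
  by_cases hlt : L < 400000
  · exact sieve L p hlt (by omega) hp hR
  by_cases hp' : p < 149
  · have : p = 29 ∨ p = 69 ∨ p = 109 := by omega
    rcases this with rfl | rfl | rfl
    · exact sieve29 L hR
    · exact sieve69 L hR
    · exact sieve109 L hR
  have hn := norm_pow_eq 5 B p
  rw [h] at hn
  refine pade_contra L (((⟨5, 1⟩ : ℤ√(-B)) ^ p).im) (((p + 1) / 2) / 3) (((p + 1) / 2) % 3) p (by omega) (by omega) (by omega)
    (by omega) (by rw [Int.odd_iff]; omega) ?_
  rw [hL, show 25 + B - 25 = B by ring]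
  norm_num at hn
  linarith

theorem elem (a B : ℤ) (p x : ℕ) (hp : p.Prime) (hp2 : p ≠ 2) (hx : x = 3 ∨ x = 5) (hB0 : 0 < B) (hB : B % 4 = 2)
    (hcop : IsCoprime (a ^ 2 + B) (x : ℤ)) (h : ((⟨a, 1⟩ : ℤ√(-B)) ^ p).re = x) : a ^ 2 + B = 3 ∧ p = 3 := by
  obtain ⟨m, rfl⟩ : ∃ m, p = 2 * m + 1 := hp.odd_of_ne_two hp2
  have hm0 : 0 < m := by have := hp.two_le; omega
  have hre := re_pow a B m
  rw [h] at hre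
  have hxp : x.Prime := by rcases hx with rfl | rfl <;> norm_num
  have hmod := SS_mod_p (a ^ 2) B m hp
  have hax : a.natAbs ∣ x := by
    have : a ∣ (x : ℤ) := ⟨_, hre⟩
    simpa using Int.natAbs_dvd_natAbs.mpr this
  have hdiv : ∀ z : ℤ, ((2 * m + 1 : ℕ) : ℤ) ∣ z → (z = 2 ∨ z = -2 ∨ z = 4 ∨ z = -4) → False := by
    intro z hz hz'
    have h1 : (2 * m + 1) ∣ z.natAbs := Int.natCast_dvd.mp hz
    have h2 : z.natAbs ∣ 2 ^ 2 := by rcases hz' with rfl | rfl | rfl | rfl <;> decide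
    have := hp.dvd_of_dvd_pow (h1.trans h2)
    have := Nat.le_of_dvd (by norm_num) this
    omega
  rcases (Nat.dvd_prime hxp).mp hax with ha | ha
  · have ha2 : a ^ 2 = 1 := by
      rw [← Int.natAbs_sq, ha]; norm_num
    rw [ha2] at hre hmod
    rw [one_pow] at hmod
    have haa : a = 1 ∨ a = -1 := by omega
    have hS : SS 1 B m = x ∨ SS 1 B m = -x := by
      rcases haa with rfl | rfl
      · left; linarith
      · right; linarith
    have hS5 : SS 1 B m = -5 := by
      rcases hx with rfl | rfl <;> rcases hS with hS | hS
      · exact (hdiv _ hmod (by rw [hS]; norm_num)).elim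
      · exact (hdiv _ hmod (by rw [hS]; norm_num)).elim
      · exact (hdiv _ hmod (by rw [hS]; norm_num)).elim
      · exact hS
    rw [hS5] at hmod
    have h6 : (2 * m + 1) ∣ 6 := Int.natCast_dvd.mp hmod
    have h7 : m = 1 := by
      have := Nat.le_of_dvd (by norm_num) h6
      have : m ≤ 2 := by omega
      interval_cases m
      · rfl
      · revert h6; decide
    subst h7
    simp [SS, Finset.sum_range_succ] at hS5
    refine ⟨?_, rfl⟩
    rw [ha2]; linarith
  · exfalso
    have ha2 : a ^ 2 = (x : ℤ) ^ 2 := by rw [← Int.natAbs_sq, ha]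
    rw [ha2] at hre hmod hcop
    have haa : a = x ∨ a = -x := by omega
    have hx0 : (x : ℤ) ≠ 0 := by have := hxp.pos; omega
    have hS : (a = x ∧ SS ((x : ℤ) ^ 2) B m = 1) ∨ SS ((x : ℤ) ^ 2) B m = -1 := by
      rcases haa with haa | haa
      · left
        refine ⟨haa, ?_⟩
        rw [haa] at hre
        have : (x : ℤ) * (SS ((x : ℤ) ^ 2) B m - 1) = 0 := by linarith
        rcases mul_eq_zero.mp this with h | h
        · exact absurd h hx0
        · linarith
      · right
        rw [haa] at hre
        have : (x : ℤ) * (SS ((x : ℤ) ^ 2) B m + 1) = 0 := by linarith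
        rcases mul_eq_zero.mp this with h | h
        · exact absurd h hx0
        · linarith
    have hpx : 2 * m + 1 ≠ x := by
      intro hpx
      have : ((2 * m + 1 : ℕ) : ℤ) ∣ SS ((x : ℤ) ^ 2) B m := by
        have h1 : ((2 * m + 1 : ℕ) : ℤ) ∣ ((x : ℤ) ^ 2) ^ m := by
          rw [hpx, ← pow_mul]; exact dvd_pow_self _ (by omega)
        have := hmod.add h1
        rwa [sub_add_cancel] at this
      have h1 : ((2 * m + 1 : ℕ) : ℤ) ∣ 1 := by
        rcases hS with hS | hS
        · rwa [hS.2] at this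
        · rw [hS] at this; exact (dvd_neg).mp this
      have := Int.le_of_dvd (by norm_num) h1
      omega
    have hferm : ((2 * m + 1 : ℕ) : ℤ) ∣ ((x : ℤ) ^ 2) ^ m - 1 := by
      have hc : IsCoprime (x : ℤ) ((2 * m + 1 : ℕ) : ℤ) := by
        rw [Nat.isCoprime_iff_coprime, Nat.coprime_primes hxp hp]; omega
      have := (Int.ModEq.pow_card_sub_one_eq_one hp hc).symm.dvd
      rwa [Nat.add_sub_cancel, pow_mul] at this
    have hS1 := hmod.add hferm
    rw [sub_add_sub_cancel] at hS1
    obtain ⟨hax', hS⟩ : a = x ∧ SS ((x : ℤ) ^ 2) B m = 1 := by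
      rcases hS with hS | hS
      · exact hS
      · exact (hdiv _ hS1 (by rw [hS]; norm_num)).elim
    by_cases hm : m % 2 = 1
    · have := SS_mod_four ((x : ℤ) ^ 2) B m (by rcases hx with rfl | rfl <;> norm_num) hB hm
      omega
    have hme : Even m := by rw [Nat.even_iff]; omega
    have hcB : ¬ (x : ℤ) ∣ B := by
      intro hd
      have h1 : (x : ℤ) ∣ (x : ℤ) ^ 2 + B := (dvd_pow_self _ two_ne_zero).add hd
      have := hcop.isUnit_of_dvd' h1 dvd_rfl
      rw [Int.isUnit_iff] at this
      rcases hx with rfl | rfl <;> omega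
    rcases hx with rfl | rfl
    · refine q_contra 3 2 m B hxp (by norm_num) hme hm0 hme.two_dvd (by norm_num) ?_ (by exact_mod_cast hS)
      have : B % 3 = 1 ∨ B % 3 = 2 := by push_cast at hcB; omega
      apply Int.dvd_of_emod_eq_zero
      push_cast
      rcases this with h | h <;> simp [Int.sub_emod, pow_two, Int.mul_emod, h]
    · have hB5 : B % 5 = 1 ∨ B % 5 = 2 ∨ B % 5 = 3 ∨ B % 5 = 4 := by push_cast at hcB; omega
      by_cases h4 : 4 ∣ m
      · refine q_contra 5 4 m B hxp (by norm_num) hme hm0 h4 (by norm_num) ?_ (by exact_mod_cast hS)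
        apply Int.dvd_of_emod_eq_zero
        push_cast
        rcases hB5 with h | h | h | h <;> simp [Int.sub_emod, pow_succ, Int.mul_emod, h]
      by_cases h1 : B % 5 = 1 ∨ B % 5 = 4
      · refine q_contra 5 2 m B hxp (by norm_num) hme hm0 hme.two_dvd (by norm_num) ?_ (by exact_mod_cast hS)
        apply Int.dvd_of_emod_eq_zero
        push_cast
        rcases h1 with h | h <;> simp [Int.sub_emod, pow_succ, Int.mul_emod, h]
      have hB2 : B ^ 2 ≡ -1 [ZMOD 5] := by
        have : B % 5 = 2 ∨ B % 5 = 3 := by omega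
        show B ^ 2 % 5 = -1 % 5
        rcases this with h | h <;> simp [pow_succ, Int.mul_emod, h]
      obtain ⟨w, hw⟩ := hme.two_dvd
      have hwo : Odd w := by
        rw [Nat.odd_iff]; omega
      have hBm : B ^ m ≡ -1 [ZMOD 5] := by
        have := hB2.pow w
        rwa [hwo.neg_one_pow, ← pow_mul, ← hw] at this
      have h3 := SS_q 5 B m 0 hxp (by norm_num) hme (by simp)
      have hS' : SS (((5 : ℕ) : ℤ) ^ 2) B m = 1 := hS
      rw [hS'] at h3
      have h5 : (5 : ℤ) ∣ 1 - (2 * m + 1) * B ^ m := by simpa using h3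
      obtain ⟨u, hu⟩ := hBm.symm.dvd
      have hBm' : B ^ m = -1 + 5 * u := by linarith
      rw [hBm'] at h5
      have h6 : (5 : ℤ) ∣ 2 * m + 2 := by
        have := h5.add (Dvd.intro ((2 * (m : ℤ) + 1) * u) rfl : (5 : ℤ) ∣ 5 * ((2 * m + 1) * u))
        have e : 1 - (2 * (m : ℤ) + 1) * (-1 + 5 * u) + 5 * ((2 * m + 1) * u) = 2 * m + 2 := by ring
        rwa [e] at this
      rw [hax'] at h
      have hp40 : (2 * m + 1) % 40 = 29 := by
        have : w % 2 = 1 := Nat.odd_iff.mp hwo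
        omega
      exact hard_case B (2 * m + 1) hB0 hB hp40 (by exact_mod_cast h)

/-! Algebraic part -/

lemma even_of_rat (M D : ℤ) (r : ℚ) (hD : D % 4 = 2) (h : (M : ℚ) = D * r ^ 2) : Even M := by
  by_contra hM
  rw [Int.not_even_iff_odd] at hM
  have hr : r = r.num / r.den := (Rat.num_div_den r).symm
  have hden : (r.den : ℚ) ≠ 0 := by exact_mod_cast r.den_nz
  have h1 : M * (r.den : ℤ) ^ 2 = D * r.num ^ 2 := by
    have : (M : ℚ) * (r.den : ℚ) ^ 2 = D * (r.num : ℚ) ^ 2 := by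
      rw [h]
      nth_rw 1 [hr]
      field_simp
    exact_mod_cast this
  have hDe : Even D := by rw [Int.even_iff]; omega
  have h2 : Even (M * (r.den : ℤ) ^ 2) := by rw [h1]; exact hDe.mul_right _
  have h3 : Even (r.den : ℤ) := by
    rcases Int.even_mul.mp h2 with h | h
    · exact absurd h (Int.not_even_iff_odd.mpr hM)
    · exact (Int.even_pow.mp h).1
  have h4 : Odd r.num := by
    rw [← Int.not_even_iff_odd]
    intro h5
    have hc := r.reduced
    have h6 : 2 ∣ r.num.natAbs := Int.natAbs_dvd_natAbs.mpr h5.two_dvd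
    have h7 : 2 ∣ r.den := by exact_mod_cast h3.two_dvd
    have := Nat.dvd_gcd h6 h7
    rw [hc] at this
    omega
  obtain ⟨f, hf⟩ := h3.two_dvd
  obtain ⟨e, he⟩ := h4
  obtain ⟨d, hd⟩ : ∃ d, D = 4 * d + 2 := ⟨D / 4, by omega⟩
  rw [hf, he, hd] at h1
  have : 4 * (M * f ^ 2 - d * (2 * e + 1) ^ 2 - 2 * e ^ 2 - 2 * e) = 2 := by linear_combination h1
  omega

lemma int_of_integral (r : ℚ) (h : IsIntegral ℤ (r : ℂ)) : ∃ z : ℤ, (z : ℚ) = r := by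
  have h1 : IsIntegral ℤ r := by
    have h2 : IsIntegral ℤ (algebraMap ℚ ℂ r) := by simpa using h
    exact (isIntegral_algebraMap_iff (algebraMap ℚ ℂ).injective).mp h2
  obtain ⟨y, hy⟩ := IsIntegrallyClosed.isIntegral_iff.mp h1
  exact ⟨y, by simpa using hy⟩

lemma sqrt_sq (D : ℤ) : ((D : ℂ) ^ ((1 : ℂ) / 2)) ^ 2 = D := by
  have := Complex.cpow_nat_inv_pow (D : ℂ) (n := 2) two_ne_zero
  simpa using this

lemma re_zero (D : ℤ) (hD : D < 0) (s : ℂ) (hs : s ^ 2 = D) : s.re = 0 ∧ s.im ^ 2 = -D := by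
  have h1 := congrArg Complex.re hs
  have h2 := congrArg Complex.im hs
  simp [sq] at h1 h2
  have hD' : (D : ℝ) < 0 := by exact_mod_cast hD
  have h3 : s.re = 0 := by
    rcases (by simpa using h2 : s.re * s.im + s.im * s.re = 0) |> fun h => mul_eq_zero.mp (by linarith : s.re * s.im = 0) with h | h
    · exact h
    · rw [h] at h1; nlinarith
  refine ⟨h3, ?_⟩
  rw [h3] at h1; nlinarith

lemma mem_form (D : ℤ) (z : ℂ) (hz : z ∈ Qsqrt D) : ∃ u v : ℚ, z = u + v * (D : ℂ) ^ ((1 : ℂ) / 2) := by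
  have hs := sqrt_sq D
  rw [Qsqrt] at hz
  set s := (D : ℂ) ^ ((1 : ℂ) / 2)
  have halg : IsAlgebraic ℚ s := by
    apply IsIntegral.isAlgebraic
    apply IsIntegral.of_pow (n := 2) (by norm_num)
    rw [hs]
    have := isIntegral_algebraMap (R := ℚ) (A := ℂ) (x := (D : ℚ))
    simpa using this
  rw [← IntermediateField.mem_toSubalgebra, IntermediateField.adjoin_simple_toSubalgebra_of_isAlgebraic halg] at hz
  induction hz using Algebra.adjoin_induction with
  | mem x hx => exact ⟨0, 1, by rw [Set.mem_singleton_iff.mp hx]; simp⟩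
  | algebraMap r => exact ⟨r, 0, by simp⟩
  | add x y _ _ hx hy =>
    obtain ⟨u, v, rfl⟩ := hx
    obtain ⟨u', v', rfl⟩ := hy
    exact ⟨u + u', v + v', by push_cast; ring⟩
  | mul x y _ _ hx hy =>
    obtain ⟨u, v, rfl⟩ := hx
    obtain ⟨u', v', rfl⟩ := hy
    exact ⟨u * u' + D * v * v', u * v' + u' * v, by push_cast; rw [← hs]; ring⟩

lemma shape (D : ℤ) (hD0 : D < 0) (hD : D % 4 = 2) (z : ℂ) (hz : z ∈ Qsqrt D) (hi : IsIntegral ℤ z) :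
    ∃ (a B : ℤ) (v : ℚ), z = a + v * (D : ℂ) ^ ((1 : ℂ) / 2) ∧ (B : ℚ) = -D * v ^ 2 ∧ Even B ∧
      Complex.normSq z = ((a ^ 2 + B : ℤ) : ℝ) := by
  obtain ⟨u, v, huv⟩ := mem_form D z hz
  have hs := sqrt_sq D
  set s := (D : ℂ) ^ ((1 : ℂ) / 2)
  obtain ⟨hre, him⟩ := re_zero D hD0 s hs
  have hic : IsIntegral ℤ ((starRingEnd ℂ) z) := by
    have := hi.map (starRingEnd ℂ).toIntAlgHom
    simpa using this
  have hn : Complex.normSq z = ((u ^ 2 - D * v ^ 2 : ℚ) : ℝ) := by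
    rw [Complex.normSq_apply, huv]
    simp [hre]
    have : (s.im : ℝ) ^ 2 = -D := him
    linear_combination (v : ℝ) ^ 2 * this
  have ht : z + (starRingEnd ℂ) z = ((2 * u : ℚ) : ℂ) := by
    rw [Complex.add_conj, huv]
    simp [hre]
  obtain ⟨t, ht'⟩ := int_of_integral (2 * u) (by rw [← ht]; exact hi.add hic)
  obtain ⟨N, hN⟩ := int_of_integral (u ^ 2 - D * v ^ 2) (by
    have : (((u ^ 2 - D * v ^ 2 : ℚ)) : ℂ) = z * (starRingEnd ℂ) z := by
      rw [Complex.mul_conj, hn]; push_cast; rfl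
    rw [this]; exact hi.mul hic)
  have hev : Even (t ^ 2 - 4 * N) := even_of_rat _ D (2 * v) hD (by
    push_cast; rw [ht', hN]; ring)
  have hte : Even t := by
    have : Even (t ^ 2) := by
      have := hev.add (show Even (4 * N) from ⟨2 * N, by ring⟩)
      simpa using this
    exact (Int.even_pow.mp this).1
  obtain ⟨a, ha⟩ := hte.two_dvd
  have hua : u = a := by
    rw [ha] at ht'; push_cast at ht'; linarith
  have hB : ((N - a ^ 2 : ℤ) : ℚ) = -D * v ^ 2 := by
    push_cast; rw [hN, hua]; ring
  refine ⟨a, N - a ^ 2, v, ?_, hB, ?_, ?_⟩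
  · rw [huv, hua]; simp
  · have := even_of_rat (-(N - a ^ 2)) D v hD (by push_cast at hB ⊢; linarith)
    simpa using this.neg
  · rw [hn, ← hN]; push_cast; ring

lemma final_step (D : ℤ) (ℓ n x p : ℕ) (hD0 : D < 0) (hD : D % 4 = 2) (hDe : D = (x : ℤ) ^ 2 - (ℓ : ℤ) ^ n)
    (hx : x = 3 ∨ x = 5) (hgcd : Nat.gcd ℓ x = 1) (hℓ4 : ℓ % 4 = 3) (hnodd : Odd n)
    (hp : p.Prime) (hpn : p ∣ n) (z : ℂ) (hz : z ∈ Qsqrt D) (hi : IsIntegral ℤ z)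
    (h : z ^ p = x + (D : ℂ) ^ ((1 : ℂ) / 2)) : ℓ = 3 ∧ n = 3 := by
  obtain ⟨a, B, v, hzf, hB, hBe, hN⟩ := shape D hD0 hD z hz hi
  have hs := sqrt_sq D
  set s := (D : ℂ) ^ ((1 : ℂ) / 2)
  obtain ⟨hre, him⟩ := re_zero D hD0 s hs
  obtain ⟨k, rfl⟩ := hpn
  have hpo : Odd p := (Nat.odd_mul.mp hnodd).1
  have hko : Odd k := (Nat.odd_mul.mp hnodd).2
  have hD0q : (D : ℚ) < 0 := by exact_mod_cast hD0
  have hD0r : (D : ℝ) < 0 := by exact_mod_cast hD0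
  have hB0 : 0 < B := by
    have h1 : (0 : ℚ) ≤ B := by rw [hB]; nlinarith [sq_nonneg v]
    have h2 : 0 ≤ B := by exact_mod_cast h1
    rcases h2.lt_or_eq with h3 | h3
    · exact h3
    · exfalso
      have hv : v = 0 := by
        rw [← h3] at hB
        have : (D : ℚ) * v ^ 2 = 0 := by push_cast at hB; linarith
        rcases mul_eq_zero.mp this with h | h
        · exact absurd h hD0q.ne
        · exact pow_eq_zero_iff two_ne_zero |>.mp h
      rw [hv] at hzf
      have hz' : z = ((a : ℝ) : ℂ) := by rw [hzf]; simp
      have h4 := congrArg Complex.im h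
      rw [hz', ← Complex.ofReal_pow, Complex.ofReal_im] at h4
      simp at h4
      rw [← h4] at him
      norm_num at him
      omega
  have hnorm : (a ^ 2 + B) ^ p = ((ℓ : ℤ) ^ k) ^ p := by
    have h1 := congrArg Complex.normSq h
    rw [map_pow, hN, Complex.normSq_apply] at h1
    simp [hre] at h1
    have h2 : (((a ^ 2 + B) ^ p : ℤ) : ℝ) = ((((ℓ : ℤ) ^ k) ^ p : ℤ) : ℝ) := by
      rw [← pow_mul, mul_comm k p]
      have h3 : (D : ℝ) = (x : ℝ) ^ 2 - (ℓ : ℝ) ^ (p * k) := by exact_mod_cast congrArg (Int.cast : ℤ → ℝ) hDe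
      push_cast
      rw [h1]; nlinarith
    exact_mod_cast h2
  have hL : a ^ 2 + B = (ℓ : ℤ) ^ k := by
    refine (pow_left_inj₀ (by positivity) (by positivity) hp.ne_zero).mp hnorm
  have hL4 : ((ℓ : ℤ) ^ k) % 4 = 3 := by
    have : (ℓ : ℤ) ≡ -1 [ZMOD 4] := by show (ℓ : ℤ) % 4 = -1 % 4; omega
    have := this.pow k
    rw [hko.neg_one_pow] at this
    have h' : (ℓ : ℤ) ^ k % 4 = -1 % 4 := this
    rw [h']; norm_num
  have hB4 : B % 4 = 2 := by
    have hB2 : B % 2 = 0 := Int.even_iff.mp hBe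
    rcases Int.even_or_odd a with ha | ha
    · obtain ⟨c, hc⟩ := ha.two_dvd
      have : a ^ 2 = 4 * c ^ 2 := by rw [hc]; ring
      omega
    · obtain ⟨c, hc⟩ := ha
      have : a ^ 2 = 4 * (c ^ 2 + c) + 1 := by rw [hc]; ring
      omega
  have hcop : IsCoprime (a ^ 2 + B) (x : ℤ) := by
    rw [hL]
    apply IsCoprime.pow_left
    rw [Nat.isCoprime_iff_coprime]; exact hgcd
  have hvs : ((v : ℂ) * s) * (v * s) = ((-B : ℤ) : ℂ) := by
    have : (B : ℂ) = -D * v ^ 2 := by exact_mod_cast congrArg (Rat.cast : ℚ → ℂ) hB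
    push_cast
    rw [this, ← hs]; ring
  set φ : ℤ√(-B) →+* ℂ := Zsqrtd.lift ⟨(v : ℂ) * s, hvs⟩ with hφ
  have hφv : ∀ w : ℤ√(-B), φ w = w.re + w.im * (v * s) := fun w => rfl
  have hreX : ((⟨a, 1⟩ : ℤ√(-B)) ^ p).re = x := by
    have h1 : φ ((⟨a, 1⟩ : ℤ√(-B)) ^ p) = x + s := by
      rw [map_pow, hφv, ← h, hzf]; simp
    rw [hφv] at h1
    have h2 := congrArg Complex.re h1
    simp [hre] at h2
    exact_mod_cast h2
  obtain ⟨h1, h2⟩ := elem a B p x hp (by rintro rfl; exact absurd hpo (by decide)) hx hB0 hB4 hcop hreX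
  rw [hL] at h1
  have h3 : ℓ ^ k = 3 := by exact_mod_cast h1
  have h4 : k = 1 := by
    by_contra hk
    have hk2 : 2 ≤ k := by have := hko.pos; omega
    have hl3 : 3 ≤ ℓ := by omega
    have : 3 ^ 2 ≤ ℓ ^ k := (Nat.pow_le_pow_left hl3 2).trans (Nat.pow_le_pow_right (by omega) hk2)
    omega
  subst h4
  refine ⟨by simpa using h3, by omega⟩

lemma class_dichotomy {O : Type*} [CommRing O] [IsDomain O] [IsDedekindDomain O] (α α' c : O) (n : ℕ) (hn : 0 < n)
    (h0 : α ≠ 0) (hc : IsCoprime α α') (h : α * α' = c ^ n) :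
    n ∣ Nat.card (ClassGroup O) ∨ ∃ p : ℕ, p.Prime ∧ p ∣ n ∧ ∃ β : O, Associated (β ^ p) α := by
  have hI : IsCoprime (Ideal.span {α}) (Ideal.span {α'}) := (Ideal.isCoprime_span_singleton_iff α α').mpr hc
  have hm : Ideal.span {α} * Ideal.span {α'} = (Ideal.span {c}) ^ n := by
    rw [Ideal.span_singleton_mul_span_singleton, Ideal.span_singleton_pow, h]
  obtain ⟨J, hJ⟩ := exists_eq_pow_of_mul_eq_pow_of_coprime hI hm
  have hJ0 : J ≠ 0 := by
    rintro rfl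
    rw [zero_pow hn.ne'] at hJ
    exact h0 (Ideal.span_singleton_eq_bot.mp hJ)
  have hJm : J ∈ nonZeroDivisors (Ideal O) := mem_nonZeroDivisors_of_ne_zero hJ0
  have hpow : ∀ k : ℕ, (ClassGroup.mk0 (⟨J, hJm⟩ : nonZeroDivisors (Ideal O))) ^ k = 1 ↔ (J ^ k).IsPrincipal := by
    intro k
    rw [← map_pow, ← ClassGroup.mk0_eq_one_iff (pow_mem hJm k)]
    rfl
  by_cases hq : ∃ p : ℕ, p.Prime ∧ p ∣ n ∧ (ClassGroup.mk0 (⟨J, hJm⟩ : nonZeroDivisors (Ideal O))) ^ (n / p) = 1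
  · right
    obtain ⟨p, hp, hpn, h1⟩ := hq
    refine ⟨p, hp, hpn, ?_⟩
    obtain ⟨β, hβ⟩ := ((hpow _).mp h1).principal
    refine ⟨β, ?_⟩
    rw [← Ideal.span_singleton_eq_span_singleton, ← Ideal.span_singleton_pow, hJ]
    have : J ^ (n / p) = Ideal.span {β} := hβ
    rw [← this, ← pow_mul, Nat.div_mul_cancel hpn]
  · left
    push Not at hq
    have h2 := orderOf_eq_of_pow_and_pow_div_prime hn ((hpow n).mpr (by rw [← hJ]; exact ⟨⟨α, rfl⟩⟩)) hq
    rw [← h2]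
    exact orderOf_dvd_natCard _

lemma numberField_Qsqrt (D : ℤ) : NumberField (Qsqrt D) := by
  have hs := sqrt_sq D
  have : FiniteDimensional ℚ (Qsqrt D) := by
    unfold Qsqrt
    apply IntermediateField.adjoin.finiteDimensional
    apply IsIntegral.of_pow (n := 2) (by norm_num)
    rw [hs]
    have := isIntegral_algebraMap (R := ℚ) (A := ℂ) (x := (D : ℚ))
    simpa using this
  exact { to_charZero := inferInstance, to_finiteDimensional := this }

lemma unit_pm (D : ℤ) (hD0 : D < 0) (hD : D % 4 = 2) (u w : ℂ) (hu : u ∈ Qsqrt D) (hw : w ∈ Qsqrt D)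
    (hui : IsIntegral ℤ u) (hwi : IsIntegral ℤ w) (huw : u * w = 1) : u = 1 ∨ u = -1 := by
  obtain ⟨a, B, v, huf, hB, hBe, hN⟩ := shape D hD0 hD u hu hui
  obtain ⟨a', B', v', -, hB', -, hN'⟩ := shape D hD0 hD w hw hwi
  have hD0q : (D : ℚ) < 0 := by exact_mod_cast hD0
  have hB0 : 0 ≤ B := by
    have h1 : (0 : ℚ) ≤ B := by rw [hB]; nlinarith [sq_nonneg v]
    exact_mod_cast h1
  have hB0' : 0 ≤ B' := by
    have h1 : (0 : ℚ) ≤ B' := by rw [hB']; nlinarith [sq_nonneg v']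
    exact_mod_cast h1
  have h1 := congrArg Complex.normSq huw
  rw [map_mul, hN, hN', map_one] at h1
  have h2 : (a ^ 2 + B) * (a' ^ 2 + B') = 1 := by exact_mod_cast h1
  have h3 : a ^ 2 + B = 1 := by
    rcases Int.eq_one_or_neg_one_of_mul_eq_one h2 with h | h
    · exact h
    · nlinarith [sq_nonneg a]
  have hB1 : B = 0 := by
    obtain ⟨c, hc⟩ := hBe.two_dvd
    have := sq_nonneg a
    omega
  have hv : v = 0 := by
    rw [hB1] at hB
    have : (D : ℚ) * v ^ 2 = 0 := by push_cast at hB; linarith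
    rcases mul_eq_zero.mp this with h | h
    · exact absurd h hD0q.ne
    · exact pow_eq_zero_iff two_ne_zero |>.mp h
  have ha : a = 1 ∨ a = -1 := by
    rw [hB1, add_zero] at h3
    rcases mul_eq_zero.mp (show (a - 1) * (a + 1) = 0 by linear_combination h3) with h | h <;> omega
  rw [hv] at huf
  rcases ha with rfl | rfl
  · left; rw [huf]; simp
  · right; rw [huf]; simp

theorem main (ℓ n x : ℕ) (hℓ1 : 1 < ℓ) (hn1 : 1 < n) (hnodd : Odd n)
    (hℓ4 : ℓ % 4 = 3) (hx : x = 3 ∨ x = 5) (hgcd : Nat.gcd ℓ x = 1)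
    (hexc : ¬ (ℓ = 3 ∧ n = 3)) :
    n ∣ classNumSqrt ((x : ℤ) ^ 2 - (ℓ : ℤ) ^ n) := by
  obtain ⟨D, hDe⟩ : ∃ D, D = (x : ℤ) ^ 2 - (ℓ : ℤ) ^ n := ⟨_, rfl⟩
  rw [← hDe]
  have hℓ3 : 3 ≤ ℓ := by omega
  have hn3 : 3 ≤ n := by obtain ⟨k, hk⟩ := hnodd; omega
  have hℓn : 27 ≤ ℓ ^ n := by
    calc 27 = 3 ^ 3 := by norm_num
      _ ≤ ℓ ^ 3 := Nat.pow_le_pow_left hℓ3 3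
      _ ≤ ℓ ^ n := Nat.pow_le_pow_right (by omega) hn3
  have hℓn' : (27 : ℤ) ≤ (ℓ : ℤ) ^ n := by exact_mod_cast hℓn
  have hD0 : D < 0 := by
    rw [hDe]; rcases hx with rfl | rfl <;> norm_num <;> omega
  have hD : D % 4 = 2 := by
    have h1 : ((ℓ : ℤ) ^ n) % 4 = 3 := by
      have : (ℓ : ℤ) ≡ -1 [ZMOD 4] := by show (ℓ : ℤ) % 4 = -1 % 4; omega
      have := this.pow n
      rw [hnodd.neg_one_pow] at this
      have h' : (ℓ : ℤ) ^ n % 4 = -1 % 4 := this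
      rw [h']; norm_num
    rw [hDe]; rcases hx with rfl | rfl <;> norm_num <;> omega
  have hNF := numberField_Qsqrt D
  have hs := sqrt_sq D
  have hsK : (D : ℂ) ^ ((1 : ℂ) / 2) ∈ Qsqrt D := IntermediateField.mem_adjoin_simple_self ℚ _
  have hfin := fun p hp hpn z hz hi h => final_step D ℓ n x p hD0 hD hDe hx hgcd hℓ4 hnodd hp hpn z hz hi h
  obtain ⟨s, hsdef⟩ : ∃ s, s = (D : ℂ) ^ ((1 : ℂ) / 2) := ⟨_, rfl⟩
  rw [← hsdef] at hs hsK hfin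
  have hsI : IsIntegral ℤ (⟨s, hsK⟩ : Qsqrt D) := by
    apply IsIntegral.of_pow (n := 2) (by norm_num)
    have : (⟨s, hsK⟩ : Qsqrt D) ^ 2 = algebraMap ℤ (Qsqrt D) D := by
      apply Subtype.ext
      simpa using hs
    rw [this]
    exact isIntegral_algebraMap
  set σ : NumberField.RingOfIntegers (Qsqrt D) := ⟨⟨s, hsK⟩, hsI⟩ with hσ
  have hσ2 : σ ^ 2 = (D : NumberField.RingOfIntegers (Qsqrt D)) := by
    apply NumberField.RingOfIntegers.ext
    apply Subtype.ext
    have e : (((algebraMap (NumberField.RingOfIntegers (Qsqrt D)) (Qsqrt D) (σ ^ 2) : Qsqrt D)) : ℂ) = s ^ 2 := by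
      rw [map_pow]; rfl
    rw [e, hs]
    exact (map_intCast ((algebraMap (Qsqrt D) ℂ).comp (algebraMap (NumberField.RingOfIntegers (Qsqrt D)) (Qsqrt D))) D).symm
  set ι : NumberField.RingOfIntegers (Qsqrt D) →+* ℂ :=
    (algebraMap (Qsqrt D) ℂ).comp (algebraMap (NumberField.RingOfIntegers (Qsqrt D)) (Qsqrt D)) with hι
  have hισ : ι σ = s := rfl
  have hιm : ∀ z, ι z ∈ Qsqrt D := fun z => ((z : Qsqrt D)).2
  have hιi : ∀ z, IsIntegral ℤ (ι z) := fun z =>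
    (NumberField.RingOfIntegers.isIntegral_coe z).map (algebraMap (Qsqrt D) ℂ).toIntAlgHom
  have hprod : ((x : NumberField.RingOfIntegers (Qsqrt D)) + σ) * (x - σ) = (ℓ : NumberField.RingOfIntegers (Qsqrt D)) ^ n := by
    have h1 : (D : NumberField.RingOfIntegers (Qsqrt D)) = (x : NumberField.RingOfIntegers (Qsqrt D)) ^ 2 - (ℓ : NumberField.RingOfIntegers (Qsqrt D)) ^ n := by
      rw [hDe]; push_cast; rfl
    linear_combination -hσ2 - h1
  have hne : ((x : NumberField.RingOfIntegers (Qsqrt D)) + σ) ≠ 0 := by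
    intro h0
    rw [h0, zero_mul] at hprod
    have := pow_eq_zero_iff (by omega) |>.mp hprod.symm
    have : ℓ = 0 := by exact_mod_cast this
    omega
  have hcop : IsCoprime ((x : NumberField.RingOfIntegers (Qsqrt D)) + σ) (x - σ) := by
    have h1 : Nat.Coprime (2 * x) (ℓ ^ n) := by
      apply Nat.Coprime.pow_right
      apply Nat.Coprime.mul_left
      · rw [Nat.coprime_two_left, Nat.odd_iff]; omega
      · exact Nat.Coprime.symm hgcd
    obtain ⟨e, f, hef⟩ := Nat.isCoprime_iff_coprime.mpr h1
    have h2 := congrArg (Int.cast : ℤ → NumberField.RingOfIntegers (Qsqrt D)) hef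
    push_cast at h2
    rw [← hprod] at h2
    refine ⟨e + f * (x - σ), e, ?_⟩
    linear_combination h2
  rcases class_dichotomy _ _ _ n (by omega) hne hcop hprod with h | ⟨p, hp, hpn, β, u, hu⟩
  · exact h
  · exfalso
    have hpo : Odd p := hnodd.of_dvd_nat hpn
    have hu1 := unit_pm D hD0 hD (ι u) (ι (u⁻¹ : _ˣ)) (hιm _) (hιm _) (hιi _) (hιi _) (by
      rw [← map_mul, Units.mul_inv, map_one])
    have hu2 := congrArg ι hu
    rw [map_mul, map_pow, map_add, map_natCast, hισ] at hu2
    apply hexc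
    rcases hu1 with h1 | h1
    · exact hfin p hp hpn (ι β) (hιm _) (hιi _) (by rw [← hu2, h1, mul_one])
    · exact hfin p hp hpn (ι (-β)) (hιm _) (hιi _) (by rw [← hu2, h1, map_neg, hpo.neg_pow]; ring)


end CN

/-- Let `ℓ > 1` and `n > 1` be odd integers with `ℓ ≡ 3 (mod 4)`. For `x ∈ {3, 5}` with
`gcd(ℓ, x) = 1`, the class number of `ℚ(√(x² − ℓⁿ))` is divisible by `n`, except when
`(ℓ, n) = (3, 3)`. -/
theorem classNumber_dvd_of_sq_sub_pow_three_five
    (ℓ n x : ℕ) (hℓ1 : 1 < ℓ) (hℓodd : Odd ℓ) (hn1 : 1 < n) (hnodd : Odd n)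
    (hℓ4 : ℓ % 4 = 3) (hx : x = 3 ∨ x = 5) (hgcd : Nat.gcd ℓ x = 1)
    (hexc : ¬ (ℓ = 3 ∧ n = 3)) :
    n ∣ classNumSqrt ((x : ℤ) ^ 2 - (ℓ : ℤ) ^ n) := by
  exact CN.main ℓ n x hℓ1 hn1 hnodd hℓ4 hx hgcd hexc
end

section
/- If n ≥ 3 is an odd integer, then for any integer U ≥ 2 the ideal class group of the imaginary quadratic field ℚ(√(1 − 4U^n)) contains an element of order n; in particular, n divides the class number of ℚ(√(1 − 4U^n)). -/
lemma aux_seq (V : ℤ) (L : ℕ → ℤ) (h0 : L 0 = 2) (h1 : L 1 = 1)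
    (hL : ∀ k, L (k+2) = L (k+1) - V * L k) (k : ℕ) :
    (∃ c, 2 * L (k+3) = 2 - 2*((k:ℤ)+3)*V + ((k:ℤ)+3)*k*V^2 + 2*V^3*c) ∧
    (∃ c, 2 * L (k+4) = 2 - 2*((k:ℤ)+4)*V + ((k:ℤ)+4)*(k+1)*V^2 + 2*V^3*c) := by
  induction k with
  | zero =>
    have h2 := hL 0
    have h3 := hL 1
    have h4 := hL 2
    norm_num at h2 h3 h4
    refine ⟨⟨0, ?_⟩, ⟨0, ?_⟩⟩
    · simp; rw [h3, h2, h1, h0]; ring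
    · simp; rw [h4, h3, h2, h1, h0]; ring
  | succ k ih =>
    obtain ⟨⟨c, hc⟩, ⟨d, hd⟩⟩ := ih
    refine ⟨⟨d, ?_⟩, ?_⟩
    · rw [show k + 1 + 3 = k + 4 by ring, hd]; push_cast; ring
    · have h := hL (k+3)
      have e : (k:ℤ) * (k+3) % 2 = 0 := by
        rcases Int.emod_two_eq_zero_or_one (k:ℤ) with h | h <;> simp [Int.mul_emod, Int.add_emod, h]
      obtain ⟨q, hq⟩ := Int.dvd_of_emod_eq_zero e
      refine ⟨d - q - V*c, ?_⟩
      rw [show k + 1 + 4 = k + 3 + 2 by ring, h, mul_sub, show k+3+1 = k+4 by ring, hd]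
      push_cast
      linear_combination (-V) * hc - V^3 * hq

lemma aux_int (V : ℤ) (hV : 2 ≤ V) (L : ℕ → ℤ) (h0 : L 0 = 2) (h1 : L 1 = 1)
    (hL : ∀ k, L (k+2) = L (k+1) - V * L k) (p : ℕ) (hp : p.Prime) (hodd : Odd p)
    (h : L p = 1 ∨ L p = -1) : False := by
  have hp3 : 3 ≤ p := by
    have := hp.two_le
    rcases hodd with ⟨t, rfl⟩; omega
  obtain ⟨k, rfl⟩ := Nat.exists_eq_add_of_le hp3
  obtain ⟨⟨c, hc⟩, -⟩ := aux_seq V L h0 h1 hL k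
  rw [show k + 3 = 3 + k by ring] at hc
  have hk : ∃ q : ℤ, (k:ℤ) = 2 * q := by
    rcases hodd with ⟨t, ht⟩
    exact ⟨t - 1, by omega⟩
  obtain ⟨q, hq⟩ := hk
  rcases h with h | h
  · rw [h] at hc
    have hV0 : V ≠ 0 := by omega
    have e : ((k:ℤ)+3) * (1 - q * V) = V^2 * c := by
      apply mul_left_cancel₀ (mul_ne_zero two_ne_zero hV0)
      rw [hq] at hc ⊢
      linear_combination hc
    have hco : IsCoprime (V^2) (1 - q*V) := by
      apply IsCoprime.pow_left
      exact ⟨q, 1, by ring⟩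
    have hd : V^2 ∣ ((3 + k : ℕ) : ℤ) := by
      apply hco.dvd_of_dvd_mul_right
      exact ⟨c, by push_cast; linear_combination e⟩
    have hpi : Prime ((3 + k : ℕ) : ℤ) := Nat.prime_iff_prime_int.mp hp
    obtain ⟨w, hw⟩ := hd
    have := hpi.irreducible.isUnit_or_isUnit (a := V) (b := V * w) (by rw [hw]; ring)
    rcases this with h | h
    · rcases Int.isUnit_iff.mp h with h | h <;> omega
    · rcases Int.isUnit_iff.mp (isUnit_of_mul_isUnit_left h) with h | h <;> omega
  · rw [h] at hc
    have hd : V ∣ 2 := by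
      refine ⟨((k:ℤ)+3) - (k+3)*q*V - V^2*c, ?_⟩
      rw [hq] at hc ⊢
      linarith
    have := Int.le_of_dvd (by norm_num) hd
    have hV2 : V = 2 := by omega
    subst hV2
    rw [hq] at hc
    have : 2 * q + 3 = 2 * (q^2) * 2  + 6 * q + 4 * c + 1 := by linarith
    omega

lemma aux_C (x y : ℂ) (V : ℤ) (hV : 2 ≤ V) (hs : x + y = 1) (hm : x * y = V)
    (p : ℕ) (hp : p.Prime) (hodd : Odd p) (h : x^p + y^p = 1 ∨ x^p + y^p = -1) : False := by
  have hex : ∀ k : ℕ, ∃ a b : ℤ, x^k + y^k = a ∧ x^(k+1) + y^(k+1) = b := by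
    intro k
    induction k with
    | zero => exact ⟨2, 1, by norm_num, by simpa using hs⟩
    | succ k ih =>
      obtain ⟨a, b, ha, hb⟩ := ih
      refine ⟨b, b - V * a, hb, ?_⟩
      push_cast
      rw [← ha, ← hb, ← hm]
      linear_combination (x^(k+1) + y^(k+1)) * hs
  choose L b hL using hex
  apply aux_int V hV L _ _ _ p hp hodd
  · rw [(hL p).1] at h
    exact_mod_cast h
  · have := (hL 0).1
    norm_num at this
    exact_mod_cast this.symm
  · have := (hL 1).1
    rw [pow_one, pow_one, hs] at this
    exact_mod_cast this.symm
  · intro k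
    have e : ((L (k+2) : ℤ) : ℂ) = ((L (k+1) - V * L k : ℤ) : ℂ) := by
      push_cast
      rw [← (hL _).1, ← (hL _).1, ← (hL _).1, ← hm]
      linear_combination (x^(k+1) + y^(k+1)) * hs
    exact_mod_cast e

lemma aux_main (x y : ℂ) (a V : ℤ) (hV : 2 ≤ V) (hs : x + y = a) (hm : x * y = V)
    (p : ℕ) (hp : p.Prime) (hodd : Odd p) (h : x^p + y^p = 1) : False := by
  have hex : ∀ k : ℕ, ∃ c d : ℤ, x^(2*k+1) + y^(2*k+1) = (a * c : ℤ) ∧ x^(2*k+2)+y^(2*k+2) = d := by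
    intro k
    induction k with
    | zero => 
      refine ⟨1, a^2 - 2*V, by simpa using hs, ?_⟩
      push_cast
      rw [← hs, ← hm]; ring
    | succ k ih =>
      obtain ⟨c, d, hc, hd⟩ := ih
      refine ⟨d - V*c, a*(a*(d - V*c)) - V*d, ?_, ?_⟩ <;> push_cast at * 
      · rw [← hd, ← hm]
        linear_combination (x^(2*k+2) + y^(2*k+2)) * hs - x*y*hc
      · have : x^(2*k+3) + y^(2*k+3) = a * (d - V*c) := by
          rw [← hd, ← hm]
          linear_combination (x^(2*k+2) + y^(2*k+2)) * hs - x*y*hc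
        rw [← this, ← hd, ← hm, ← hs]; ring
  obtain ⟨t, rfl⟩ := hodd
  obtain ⟨c, d, hc, -⟩ := hex t
  rw [h] at hc
  have hc' : a * c = 1 := by exact_mod_cast hc.symm
  rcases Int.isUnit_iff.mp (IsUnit.of_mul_eq_one _ hc') with rfl | rfl
  · exact aux_C x y V hV (by simpa using hs) hm _ hp ⟨t, rfl⟩ (Or.inl h)
  · refine aux_C (-x) (-y) V hV ?_ (by simpa using hm) _ hp ⟨t, rfl⟩ (Or.inr ?_)
    · push_cast at hs; linear_combination -hs
    · rw [Odd.neg_pow ⟨t, rfl⟩, Odd.neg_pow ⟨t, rfl⟩]; linear_combination -h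

lemma aux_flt (U k : ℤ) (m : ℕ) (hU : 2 ≤ U) (hm : m ≠ 0) (h : 4 * U^(m*3) - 1 = 3 * k^2) : False := by
  have hk : k % 2 = 1 := by
    rcases Int.emod_two_eq_zero_or_one k with h' | h'
    · obtain ⟨t, rfl⟩ := Int.dvd_of_emod_eq_zero h'
      ring_nf at h; omega
    · exact h'
  obtain ⟨t, rfl⟩ : ∃ t, k = 2*t+1 := ⟨k/2, by omega⟩
  have h1 : 1 < U^m := one_lt_pow₀ (by omega) hm
  have e : t^3 + (U^m)^3 = (t+1)^3 := by
    rw [← pow_mul]; linarith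
  have key := (fermatLastTheoremFor_iff_int.mp fermatLastTheoremThree) 
  refine key t (U^m) (t+1) ?_ (by omega) ?_ e
  · rintro rfl
    have := one_lt_pow₀ h1 (n := 3) (by norm_num)
    norm_num at e; omega
  · intro h0
    have : t = -1 := by omega
    subst this
    have := one_lt_pow₀ h1 (n := 3) (by norm_num)
    norm_num at e; omega

open ComplexConjugate

lemma aux_sqrt (D : ℤ) (hD : D < 0) : ∃ s : ℂ, Qsqrt D = IntermediateField.adjoin ℚ {s} ∧ s^2 = D ∧ conj s = -s := by
  refine ⟨(D : ℂ) ^ ((1 : ℂ) / 2), rfl, ?_, ?_⟩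
  · have := Complex.cpow_nat_inv_pow (D:ℂ) (n := 2) (by norm_num)
    simpa using this
  · have h : ((D : ℂ) ^ ((1 : ℂ) / 2))^2 = D := by
      have := Complex.cpow_nat_inv_pow (D:ℂ) (n := 2) (by norm_num)
      simpa using this
    generalize (D : ℂ) ^ ((1 : ℂ) / 2) = s at h
    have h1 := congrArg Complex.re h
    have h2 := congrArg Complex.im h
    simp [pow_two] at h1 h2
    have h3 : s.re = 0 := by
      by_contra hne
      have : s.im = 0 := by
        rcases mul_eq_zero.mp (show s.re * s.im = 0 by linarith) with h | h
        · exact absurd h hne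
        · exact h
      rw [this] at h1
      have : (D:ℝ) < 0 := by exact_mod_cast hD
      nlinarith [mul_self_nonneg s.re]
    apply Complex.ext <;> simp [h3]

lemma aux_form (D : ℤ) (hD : D < 0) (s : ℂ) (hs : s^2 = D) (z : ℂ)
    (hz : z ∈ IntermediateField.adjoin ℚ {s}) : ∃ a b : ℚ, z = a + b * s := by
  induction hz using IntermediateField.adjoin_induction with
  | mem x hx => exact ⟨0, 1, by simpa using hx⟩
  | algebraMap x => exact ⟨x, 0, by simp⟩
  | add x y _ _ hx hy =>
    obtain ⟨a, b, rfl⟩ := hx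
    obtain ⟨c, d, rfl⟩ := hy
    exact ⟨a + c, b + d, by push_cast; ring⟩
  | inv x _ hx =>
    obtain ⟨a, b, rfl⟩ := hx
    by_cases h : a^2 - b^2 * D = 0
    · have hD' : (D:ℚ) < 0 := by exact_mod_cast hD
      have hb : b = 0 := by
        by_contra hb
        have : 0 < b^2 := by positivity
        nlinarith [sq_nonneg a]
      subst hb
      have : a = 0 := by simpa using h
      subst this
      exact ⟨0, 0, by simp⟩
    · refine ⟨a / (a^2 - b^2*D), -b / (a^2 - b^2*D), ?_⟩
      have h' : ((a:ℂ)^2 - b^2*D) ≠ 0 := by exact_mod_cast h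
      have e : ((a:ℂ) + b * s) * (a - b * s) = a^2 - b^2*D := by rw [← hs]; ring
      have hne : (a:ℂ) + b * s ≠ 0 := by
        intro h0; rw [h0, zero_mul] at e; exact h' e.symm
      push_cast
      rw [← e]
      have hne2 : (a:ℂ) - b * s ≠ 0 := by
        intro h0; rw [h0, mul_zero] at e; exact h' e.symm
      field_simp
      ring
  | mul x y _ _ hx hy =>
    obtain ⟨a, b, rfl⟩ := hx
    obtain ⟨c, d, rfl⟩ := hy
    exact ⟨a * c + b * d * D, a * d + b * c, by push_cast; rw [← hs]; ring⟩

lemma aux_ratint (q : ℚ) (h : IsIntegral ℤ (q : ℂ)) : ∃ m : ℤ, (m : ℚ) = q := by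
  have h' : IsIntegral ℤ q := by
    rw [← isIntegral_algebraMap_iff (B := ℂ) (algebraMap ℚ ℂ).injective]
    simpa using h
  simpa using IsIntegrallyClosed.isIntegral_iff.mp h'

lemma aux_tn (D : ℤ) (hD : D < 0) (s : ℂ) (hs : s^2 = D) (hc : conj s = -s) (z : ℂ)
    (hz : z ∈ IntermediateField.adjoin ℚ {s}) (hi : IsIntegral ℤ z) :
    ∃ t N : ℤ, z + conj z = t ∧ z * conj z = N := by
  obtain ⟨a, b, rfl⟩ := aux_form D hD s hs z hz
  have hi' : IsIntegral ℤ (conj ((a:ℂ) + b * s)) := hi.map ((starRingEnd ℂ).toIntAlgHom)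
  have e1 : ((a:ℂ) + b * s) + conj ((a:ℂ) + b * s) = ((2 * a : ℚ) : ℂ) := by
    simp [hc]; ring
  have e2 : ((a:ℂ) + b * s) * conj ((a:ℂ) + b * s) = ((a^2 - b^2*D : ℚ) : ℂ) := by
    simp [hc]; rw [← hs]; ring
  obtain ⟨t, ht⟩ := aux_ratint (2*a) (e1 ▸ hi.add hi')
  obtain ⟨N, hN⟩ := aux_ratint (a^2 - b^2*D) (e2 ▸ hi.mul hi')
  refine ⟨t, N, ?_, ?_⟩
  · rw [e1, ← ht]; simp
  · rw [e2, ← hN]; simp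

lemma aux_normpos (z : ℂ) (N : ℤ) (hz : z ≠ 0) (h : z * conj z = N) : 0 < N := by
  rw [Complex.mul_conj] at h
  have h2 : Complex.normSq z = N := by exact_mod_cast h
  have := Complex.normSq_pos.mpr hz
  rw [h2] at this
  exact_mod_cast this

lemma aux_unit (D : ℤ) (hD : D < 0) (s : ℂ) (hs : s^2 = D) (hc : conj s = -s) (z w : ℂ)
    (hz : z ∈ IntermediateField.adjoin ℚ {s}) (hi : IsIntegral ℤ z)
    (hw : w ∈ IntermediateField.adjoin ℚ {s}) (hiw : IsIntegral ℤ w) (hzw : z * w = 1) :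
    z * conj z = 1 ∧ z^12 = 1 := by
  obtain ⟨t, N, ht, hN⟩ := aux_tn D hD s hs hc z hz hi
  obtain ⟨t', N', ht', hN'⟩ := aux_tn D hD s hs hc w hw hiw
  have hz0 : z ≠ 0 := left_ne_zero_of_mul_eq_one hzw
  have hw0 : w ≠ 0 := right_ne_zero_of_mul_eq_one hzw
  have p1 := aux_normpos z N hz0 hN
  have p2 := aux_normpos w N' hw0 hN'
  have e : N * N' = 1 := by
    have : (N:ℂ) * N' = 1 := by
      rw [← hN, ← hN', show z * conj z * (w * conj w) = (z * w) * (conj z * conj w) by ring, ← map_mul, hzw]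
      simp
    exact_mod_cast this
  have hN1 : N = 1 := by
    rcases Int.isUnit_iff.mp (IsUnit.of_mul_eq_one _ e) with h | h <;> omega
  subst hN1
  have hN1 : z * conj z = 1 := by simpa using hN
  refine ⟨hN1, ?_⟩
  have hq : z^2 = t * z - 1 := by rw [← ht]; linear_combination -hN1
  have hre : 2 * z.re = t := by
    have := congrArg Complex.re ht
    simp at this; linarith
  have hsq : z.re * z.re + z.im * z.im = 1 := by
    have := congrArg Complex.re hN1
    simpa using this
  have ht4 : t^2 ≤ 4 := by
    have : (t:ℝ)^2 ≤ 4 := by rw [← hre]; nlinarith [mul_self_nonneg z.im]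
    exact_mod_cast this
  have h1 : -2 ≤ t := by nlinarith
  have h2 : t ≤ 2 := by nlinarith
  have hz3 : z^3 = (t^2-1) * z - t := by linear_combination (z + t) * hq
  rcases (show t = -2 ∨ t = -1 ∨ t = 0 ∨ t = 1 ∨ t = 2 by omega) with rfl | rfl | rfl | rfl | rfl
  · have : z = -1 := by
      have : (z+1)^2 = 0 := by push_cast at hq; linear_combination hq
      have := pow_eq_zero_iff (two_ne_zero) |>.mp this
      linear_combination this
    rw [this]; norm_num
  · have : z^3 = 1 := by rw [hz3]; push_cast; ring
    rw [show z^12 = (z^3)^4 by ring, this]; norm_num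
  · have : z^2 = -1 := by rw [hq]; push_cast; ring
    rw [show z^12 = (z^2)^6 by ring, this]; norm_num
  · have : z^3 = -1 := by rw [hz3]; push_cast; ring
    rw [show z^12 = (z^3)^4 by ring, this]; norm_num
  · have : z = 1 := by
      have : (z-1)^2 = 0 := by push_cast at hq; linear_combination hq
      have := pow_eq_zero_iff (two_ne_zero) |>.mp this
      linear_combination this
    rw [this]; norm_num

lemma aux_omega (U : ℤ) (hU : 2 ≤ U) (m : ℕ) (hm : m ≠ 0) (s : ℂ)
    (hs : s^2 = (1 - 4 * U^(m*3) : ℤ)) (hc : conj s = -s) (hD : 1 - 4 * U^(m*3) < 0) (w : ℂ)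
    (hw : w ∈ IntermediateField.adjoin ℚ {s}) (h3 : w^3 = 1) (h1 : w ≠ 1) : False := by
  obtain ⟨a, b, hab⟩ := aux_form _ hD s hs w hw
  have hq : w^2 + w + 1 = 0 := by
    have : (w - 1) * (w^2 + w + 1) = 0 := by linear_combination h3
    exact (mul_eq_zero.mp this).resolve_left (sub_ne_zero.mpr h1)
  have hs0 : s ≠ 0 := by
    rintro rfl
    have : (0:ℤ) = 1 - 4 * U^(m*3) := by 
      have h : ((0:ℤ):ℂ) = ((1 - 4 * U^(m*3) : ℤ) : ℂ) := by rw [← hs]; simp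
      exact_mod_cast h
    omega
  set E : ℤ := 1 - 4 * U^(m*3) with hE
  have e1 : ((2*a+1)^2 + 4*b^2*E + 3 : ℂ) + 4 * (2*a+1) * b * s = 0 := by
    rw [← hs]; rw [hab] at hq; linear_combination 4 * hq
  have e2 : ((2*a+1)^2 + 4*b^2*E + 3 : ℂ) - 4 * (2*a+1) * b * s = 0 := by
    have := congrArg conj e1
    simp [hc, Complex.conj_ofNat] at this
    linear_combination this
  have e3 : (2*a+1) * b = 0 := by
    have : ((2*a+1) * b : ℂ) * s = 0 := by linear_combination (e1 - e2)/8
    have := (mul_eq_zero.mp this).resolve_right hs0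
    exact_mod_cast this
  have e4 : (2*a+1)^2 + 4*b^2*E + 3 = 0 := by
    have : ((2*a+1)^2 + 4*b^2*E + 3 : ℂ) = 0 := by linear_combination (e1 + e2)/2
    exact_mod_cast this
  have hb : b ≠ 0 := by
    rintro rfl
    nlinarith [sq_nonneg (2*a+1)]
  have ha : 2*a+1 = 0 := (mul_eq_zero.mp e3).resolve_right hb
  rw [ha] at e4
  have e5 : (3/(2*b))^2 = ((-3*E : ℤ) : ℚ) := by
    push_cast
    field_simp
    linarith
  obtain ⟨j, hj⟩ := aux_ratint (3/(2*b)) (by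
    refine IsIntegral.of_pow (n := 2) (by norm_num) ?_
    have : (((3/(2*b) : ℚ)) : ℂ)^2 = algebraMap ℤ ℂ (-3*E) := by
      rw [← Rat.cast_pow, e5]; simp
    rw [this]
    exact isIntegral_algebraMap)
  rw [← hj] at e5
  have e6 : j^2 = -3 * E := by exact_mod_cast e5
  have h3j : (3:ℤ) ∣ j := by
    apply Int.prime_three.dvd_of_dvd_pow (n := 2)
    exact ⟨-E, by rw [e6]; ring⟩
  obtain ⟨k, rfl⟩ := h3j
  refine aux_flt U k m hU hm ?_
  linarith

/-- core step -/
lemma aux_core (U : ℤ) (hU : 2 ≤ U) (m p : ℕ) (hm : m ≠ 0) (hp : p.Prime) (hodd : Odd p)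
    (s : ℂ) (hs : s^2 = (1 - 4 * U^(m*p) : ℤ)) (hc : conj s = -s) (hD : 1 - 4 * U^(m*p) < 0)
    (b u v : ℂ) (hb : b ∈ IntermediateField.adjoin ℚ {s}) (hbi : IsIntegral ℤ b)
    (hu : u ∈ IntermediateField.adjoin ℚ {s}) (hui : IsIntegral ℤ u)
    (hv : v ∈ IntermediateField.adjoin ℚ {s}) (hvi : IsIntegral ℤ v) (huv : u * v = 1)
    (h : b^p * u = (1 + s)/2) : False := by
  obtain ⟨hu1, hu12⟩ := aux_unit _ hD s hs hc u v hu hui hv hvi huv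
  -- reduce to a p-th power
  have key : ∃ g ∈ IntermediateField.adjoin ℚ {s}, IsIntegral ℤ g ∧ g^p = (1+s)/2 := by
    by_cases h3 : p = 3
    · subst h3
      have hw : u^4 = 1 := by
        by_contra hne
        exact aux_omega U hU m hm s hs hc hD (u^4) (pow_mem hu 4) (by rw [← hu12]; ring) hne
      refine ⟨b * u^3, mul_mem hb (pow_mem hu 3), hbi.mul (hui.pow 3), ?_⟩
      rw [← h]; linear_combination b^3 * u * (u^4+1) * hw
    · refine ⟨b * u^p, mul_mem hb (pow_mem hu p), hbi.mul (hui.pow p), ?_⟩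
      have hmod : p * p % 12 = 1 := by
        have h2 : ¬ 2 ∣ p := by rcases hodd with ⟨t, rfl⟩; omega
        have h3' : ¬ 3 ∣ p := fun hd => h3 ((Nat.prime_dvd_prime_iff_eq Nat.prime_three hp).mp hd).symm
        rw [Nat.mul_mod]
        have : p % 12 = 1 ∨ p % 12 = 5 ∨ p % 12 = 7 ∨ p % 12 = 11 := by omega
        rcases this with h | h | h | h <;> rw [h]
      have : u^(p*p) = u := by
        rw [← Nat.div_add_mod (p*p) 12, hmod, pow_add, pow_mul, hu12]; simp
      rw [mul_pow, ← pow_mul, this, h]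
  obtain ⟨g, hg, hgi, hgp⟩ := key
  obtain ⟨a, V, ha, hV⟩ := aux_tn _ hD s hs hc g hg hgi
  have hcp : (conj g)^p = (1-s)/2 := by
    rw [← map_pow, hgp]; simp [hc, Complex.conj_ofNat]; ring
  have hVp : V^p = (U^m)^p := by
    have : (V:ℂ)^p = (U:ℂ)^(m*p) := by
      rw [← hV, mul_pow, hgp, hcp]
      push_cast at hs
      linear_combination -hs/4
    rw [← pow_mul]
    exact_mod_cast this
  have hVU : V = U^m := (hodd.strictMono_pow).injective hVp
  have hV2 : 2 ≤ V := by
    have : 1 < U^m := one_lt_pow₀ (by omega) hm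
    omega
  exact aux_main g (conj g) a V hV2 ha hV p hp hodd (by rw [hgp, hcp]; ring)

open NumberField nonZeroDivisors in
theorem classGroup_exists_orderOf_eq_of_one_sub_four_pow
    (n : ℕ) (hn : 3 ≤ n) (hnodd : Odd n) (U : ℤ) (hU : 2 ≤ U) :
    (∃ x : ClassGroup (NumberField.RingOfIntegers (Qsqrt (1 - 4 * U ^ n))),
        orderOf x = n) ∧
      n ∣ classNumSqrt (1 - 4 * U ^ n) := by
  suffices hx : ∃ x : ClassGroup (NumberField.RingOfIntegers (Qsqrt (1 - 4 * U ^ n))),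
      orderOf x = n by
    refine ⟨hx, ?_⟩
    obtain ⟨x, hx⟩ := hx
    have := orderOf_dvd_natCard x
    rw [hx] at this
    exact this
  have hUn : 1 < U^n := one_lt_pow₀ (by omega) (by omega)
  have hD : 1 - 4 * U^n < 0 := by omega
  obtain ⟨s, hK, hs, hc⟩ := aux_sqrt _ hD
  generalize Qsqrt (1 - 4 * U ^ n) = K at hK
  have hsi : IsIntegral ℤ s := by
    refine IsIntegral.of_pow (n := 2) (by norm_num) ?_
    rw [hs]; exact isIntegral_algebraMap (R := ℤ) (A := ℂ)
  have hfd : FiniteDimensional ℚ K := by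
    rw [hK]; exact IntermediateField.adjoin.finiteDimensional hsi.tower_top
  have : NumberField K := { to_charZero := inferInstance, to_finiteDimensional := hfd }
  have hsK : s ∈ K := by rw [hK]; exact IntermediateField.mem_adjoin_simple_self ℚ s
  have haK : (1+s)/2 ∈ K := div_mem (add_mem (one_mem _) hsK) (by exact_mod_cast natCast_mem K 2)
  have hai : IsIntegral ℤ ((1+s)/2) := by
    refine ⟨Polynomial.X^2 - Polynomial.X + Polynomial.C (U^n), by monicity!, ?_⟩
    rw [← Polynomial.aeval_def]
    simp
    push_cast at hs
    linear_combination hs/4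
  have hint : ∀ x : K, IsIntegral ℤ (x:ℂ) ↔ IsIntegral ℤ x := fun x =>
    isIntegral_algebraMap_iff (B := ℂ) (x := x) (algebraMap K ℂ).injective
  let α : 𝓞 K := ⟨⟨(1+s)/2, haK⟩, (hint _).mp hai⟩
  have hinj : ∀ x y : 𝓞 K, ((x : K) : ℂ) = ((y : K) : ℂ) → x = y := fun x y h =>
    RingOfIntegers.ext (Subtype.ext h)
  have hαc : ((α : K) : ℂ) = (1+s)/2 := rfl
  have hαU : α * (1 - α) = (U : 𝓞 K)^n := by
    apply hinj
    push_cast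
    rw [hαc]
    simp
    push_cast at hs
    linear_combination -hs/4
  have hα0 : α ≠ 0 := by
    intro h
    rw [h, zero_mul] at hαU
    have h2 : (U : 𝓞 K) = 0 := pow_eq_zero_iff (by omega) |>.mp hαU.symm
    have : U = 0 := by exact_mod_cast h2
    omega
  obtain ⟨A, hA⟩ : ∃ A : Ideal (𝓞 K), Ideal.span {α} = A^n := by
    refine exists_eq_pow_of_mul_eq_pow (a := Ideal.span {α}) (b := Ideal.span {1 - α})
      (c := Ideal.span {(U : 𝓞 K)}) ?_ ?_
    · rw [Ideal.gcd_eq_sup, Ideal.isUnit_iff, Ideal.eq_top_iff_one]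
      have e : (1 : 𝓞 K) = α + (1 - α) := by ring
      have e2 : α + (1 - α) ∈ Ideal.span {α} ⊔ Ideal.span {1 - α} := Submodule.add_mem_sup (Ideal.mem_span_singleton_self _) (Ideal.mem_span_singleton_self _)
      rwa [← e] at e2
    · rw [Ideal.span_singleton_mul_span_singleton, Ideal.span_singleton_pow, hαU]
  have hA0 : A ≠ 0 := by
    rintro rfl
    rw [zero_pow (by omega)] at hA
    exact hα0 (Ideal.span_singleton_eq_bot.mp hA)
  let A' : (Ideal (𝓞 K))⁰ := ⟨A, mem_nonZeroDivisors_iff_ne_zero.mpr hA0⟩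
  have hpow : ∀ k : ℕ, (ClassGroup.mk0 A')^k = 1 ↔ (A^k).IsPrincipal := by
    intro k
    rw [← map_pow, ← ClassGroup.mk0_eq_one_iff (I := A^k) (SetLike.coe_mem (A'^k))]
    rfl
  refine ⟨ClassGroup.mk0 A', orderOf_eq_of_pow_and_pow_div_prime (n := n) (by omega) ?_ ?_⟩
  · rw [hpow, ← hA]; exact ⟨α, rfl⟩
  · intro p hp hpn h1
    rw [hpow] at h1
    obtain ⟨m, hm⟩ := hpn
    have hnm : n = m * p := by rw [hm, mul_comm]
    have hdiv : n / p = m := by rw [hm, Nat.mul_div_cancel_left _ hp.pos]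
    rw [hdiv] at h1
    obtain ⟨β, hβ⟩ := h1
    have hβ' : A^m = Ideal.span {β} := hβ
    have hass : Associated (β^p) α := by
      rw [← Ideal.span_singleton_eq_span_singleton, ← Ideal.span_singleton_pow, ← hβ', ← pow_mul,
        ← hnm, hA]
    obtain ⟨u, hu⟩ := hass
    have hmem : ∀ x : 𝓞 K, ((x : K) : ℂ) ∈ IntermediateField.adjoin ℚ {s} := fun x => by
      rw [← hK]; exact (x : K).2
    have hin : ∀ x : 𝓞 K, IsIntegral ℤ ((x : K) : ℂ) := fun x => (hint _).mpr x.2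
    have hodd : Odd p := (Nat.odd_mul.mp (hnm ▸ hnodd)).2
    subst hnm
    refine aux_core U hU m p (by rintro rfl; omega) hp hodd s hs hc hD (β : K) ((u : 𝓞 K) : K)
      ((↑u⁻¹ : 𝓞 K) : K) (hmem _) (hin _) (hmem _) (hin _) (hmem _) (hin _) ?_ ?_
    · have := congrArg (fun x : 𝓞 K => ((x : K) : ℂ)) u.mul_inv
      simpa using this
    · have := congrArg (fun x : 𝓞 K => ((x : K) : ℂ)) hu
      simp only [map_mul, map_pow] at this
      exact this
end
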